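/- arXiv:2311.02547 — 2 statements merged into one kernel-verified Lean document; each statement's English description precedes it below -/
import Mathlib

section
/- Let w ≥ 4 be an even integer. Then Σ_{a+c=w−1, a≥2, c≥1, a odd (hence c even)} ζ(a,1,c) = ζ(w−1,1) + (1/2)·(ζ(2,w−2) − ζ(w−2,2)) − (1/4)·ζ(w). -/
/-- The multiple zeta value `ζ(s₁,…,s_d) = Σ_{k₁>⋯>k_d≥1} 1/(k₁^{s₁}⋯k_d^{s_d})`. -/
noncomputable def mzv {d : ℕ} (s : Fin d → ℕ) : ℝ :=
  ∑' k : {k : Fin d → ℕ // StrictAnti k ∧ ∀ i, 0 < k i},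
    ∏ i, (1 : ℝ) / (k.1 i : ℝ) ^ s i

open Filter Topology ENNReal Finset

/-- triple sum -/
noncomputable def T3 (a b c : ℕ) : ℝ≥0∞ :=
  ∑' (k : ℕ) (l : ℕ) (m : ℕ), ENNReal.ofReal
    (if 0 < m ∧ m < l ∧ l < k then 1 / (k:ℝ)^a * (1 / (l:ℝ)^b * (1 / (m:ℝ)^c)) else 0)

noncomputable def T2 (a b : ℕ) : ℝ≥0∞ :=
  ∑' (k : ℕ) (l : ℕ), ENNReal.ofReal
    (if 0 < l ∧ l < k then 1 / (k:ℝ)^a * (1 / (l:ℝ)^b) else 0)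

noncomputable def T1 (a : ℕ) : ℝ≥0∞ :=
  ∑' (k : ℕ), ENNReal.ofReal (if 0 < k then 1 / (k:ℝ)^a else 0)

lemma mzv_toReal {d : ℕ} (s : Fin d → ℕ) :
    mzv s = (∑' k : Fin d → ℕ, ENNReal.ofReal
      (Set.indicator {k : Fin d → ℕ | StrictAnti k ∧ ∀ i, 0 < k i}
        (fun k => ∏ i, (1 : ℝ) / (k i : ℝ) ^ s i) k)).toReal := by
  rw [ENNReal.tsum_toReal_eq (fun _ => ENNReal.ofReal_ne_top)]
  have h : ∀ k : Fin d → ℕ, (ENNReal.ofReal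
      (Set.indicator {k : Fin d → ℕ | StrictAnti k ∧ ∀ i, 0 < k i}
        (fun k => ∏ i, (1 : ℝ) / (k i : ℝ) ^ s i) k)).toReal =
      Set.indicator {k : Fin d → ℕ | StrictAnti k ∧ ∀ i, 0 < k i}
        (fun k => ∏ i, (1 : ℝ) / (k i : ℝ) ^ s i) k := by
    intro k
    apply ENNReal.toReal_ofReal
    apply Set.indicator_nonneg
    intro x _
    positivity
  simp_rw [h]
  rw [← _root_.tsum_subtype]
  rfl

def e3 : ℕ × ℕ × ℕ ≃ (Fin 3 → ℕ) where
  toFun p := ![p.1, p.2.1, p.2.2]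
  invFun f := (f 0, f 1, f 2)
  left_inv p := by simp
  right_inv f := by ext i; fin_cases i <;> rfl

def e2 : ℕ × ℕ ≃ (Fin 2 → ℕ) where
  toFun p := ![p.1, p.2]
  invFun f := (f 0, f 1)
  left_inv p := by simp
  right_inv f := by ext i; fin_cases i <;> rfl

def e1 : ℕ ≃ (Fin 1 → ℕ) where
  toFun p := ![p]
  invFun f := f 0
  left_inv p := by simp
  right_inv f := by ext i; fin_cases i; rfl

lemma mzv3 (a b c : ℕ) : mzv ![a, b, c] = (T3 a b c).toReal := by
  rw [mzv_toReal, T3, ← e3.tsum_eq, ENNReal.tsum_prod']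
  congr 1
  refine tsum_congr fun k => ?_
  rw [ENNReal.tsum_prod']
  refine tsum_congr fun l => tsum_congr fun m => ?_
  congr 1
  have h : (StrictAnti ![k, l, m] ∧ ∀ i, 0 < ![k, l, m] i) ↔ (0 < m ∧ m < l ∧ l < k) := by
    constructor
    · rintro ⟨h1, h2⟩
      exact ⟨h2 2, h1 (show (1 : Fin 3) < 2 by decide), h1 (show (0 : Fin 3) < 1 by decide)⟩
    · rintro ⟨h1, h2, h3⟩
      constructor
      · rw [Fin.strictAnti_iff_succ_lt]
        intro i; fin_cases i <;> simpa
      · intro i; fin_cases i <;> simp <;> omega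
  simp only [Set.indicator, e3, Equiv.coe_fn_mk, Set.mem_ofPred_eq, h]
  simp only [Fin.prod_univ_three, mul_assoc]
  rfl

lemma mzv2 (a b : ℕ) : mzv ![a, b] = (T2 a b).toReal := by
  rw [mzv_toReal, T2, ← e2.tsum_eq, ENNReal.tsum_prod']
  congr 1
  refine tsum_congr fun l => tsum_congr fun m => ?_
  congr 1
  have h : (StrictAnti ![l, m] ∧ ∀ i, 0 < ![l, m] i) ↔ (0 < m ∧ m < l) := by
    constructor
    · rintro ⟨h1, h2⟩
      exact ⟨h2 1, h1 (show (0 : Fin 2) < 1 by decide)⟩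
    · rintro ⟨h1, h2⟩
      constructor
      · rw [Fin.strictAnti_iff_succ_lt]
        intro i; fin_cases i; simpa
      · intro i; fin_cases i <;> simp <;> omega
  simp only [Set.indicator, e2, Equiv.coe_fn_mk, Set.mem_ofPred_eq, h]
  simp [Fin.prod_univ_two, mul_comm]

lemma mzv1 (a : ℕ) : mzv ![a] = (T1 a).toReal := by
  rw [mzv_toReal, T1, ← e1.tsum_eq]
  congr 1
  refine tsum_congr fun m => ?_
  congr 1
  have h : (StrictAnti ![m] ∧ ∀ i, 0 < ![m] i) ↔ (0 < m) := by
    constructor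
    · rintro ⟨h1, h2⟩
      exact h2 0
    · intro h1
      constructor
      · intro i j hij
        exact absurd hij (by simp [Subsingleton.elim i j])
      · intro i; fin_cases i; simpa
  simp only [Set.indicator, e1, Equiv.coe_fn_mk, Set.mem_ofPred_eq, h]
  simp

lemma HasSum.congr' {f g : ℕ → ℝ} {a b : ℝ} (h : HasSum f a) (h1 : ∀ i, g i = f i) (h2 : b = a) :
    HasSum g b := by
  rw [h2, show g = f from funext h1]; exact h

lemma lag_hasSum (u : ℕ → ℝ) (hu : Antitone u) (h0 : Tendsto u atTop (𝓝 0)) (j : ℕ) :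
    HasSum (fun i => u i - u (i + j)) (∑ i ∈ range j, u i) := by
  induction j with
  | zero => simp
  | succ j ih =>
    have h1 : HasSum (fun i => u (i + j) - u (i + (j + 1))) (u j) := by
      rw [hasSum_iff_tendsto_nat_of_nonneg (fun i => sub_nonneg.2 (hu (by omega)))]
      have : ∀ n, ∑ i ∈ range n, (u (i + j) - u (i + (j + 1))) = u j - u (n + j) := by
        intro n
        induction n with
        | zero => simp
        | succ n ihn => rw [sum_range_succ, ihn, show n + (j+1) = n + 1 + j by ring]; ring
      simp_rw [this]
      have h2 : Tendsto (fun n => u (n + j)) atTop (𝓝 0) := (tendsto_add_atTop_iff_nat j).2 h0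
      simpa using tendsto_const_nhds.sub h2
    rw [sum_range_succ]
    exact (ih.add h1).congr' (fun i => by ring) rfl

lemma tsum_ite_lt (F : ℕ → ℝ≥0∞) (l : ℕ) :
    ∑' k, (if l < k then F k else 0) = ∑' i, F (l + 1 + i) := by
  rw [← Summable.sum_add_tsum_nat_add' (k := l + 1) ENNReal.summable, sum_eq_zero, zero_add]
  · refine tsum_congr fun i => ?_
    rw [if_pos (by omega), add_comm]
  · intro i hi
    rw [mem_range] at hi
    rw [if_neg (by omega)]

lemma inv_tendsto (c : ℝ) : Tendsto (fun i : ℕ => 1 / (c + i)) atTop (𝓝 0) := by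
  simp_rw [one_div]
  exact tendsto_inv_atTop_zero.comp
    (tendsto_atTop_add_const_left _ _ tendsto_natCast_atTop_atTop)

lemma inv_lag (c : ℝ) (hc : 0 < c) (j : ℕ) :
    HasSum (fun i : ℕ => 1 / (c + i) - 1 / (c + i + j)) (∑ i ∈ range j, 1 / (c + i)) := by
  have := lag_hasSum (fun i : ℕ => 1 / (c + i)) ?_ (inv_tendsto c) j
  · simpa [add_assoc] using this
  · intro a b hab
    have : (a : ℝ) ≤ b := by exact_mod_cast hab
    dsimp only
    gcongr

/-- the inner sum -/
lemma inner_k (m l : ℕ) (hm : 0 < m) (hl : m < l) :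
    HasSum (fun i : ℕ => 1 / (((l:ℝ) + 1 + i) * (((l:ℝ) + 1 + i)^2 - (m:ℝ)^2)))
      (1 / (2 * (m:ℝ)^2) * ∑ j ∈ range m, (1 / ((l:ℝ) - j) - 1 / ((l:ℝ) + 1 + j))) := by
  have hlr : (m:ℝ) + 1 ≤ l := by exact_mod_cast hl
  have hmr : (0:ℝ) < m := by exact_mod_cast hm
  have h1 := inv_lag ((l:ℝ) - m + 1) (by linarith) m
  have h2 := inv_lag ((l:ℝ) + 1) (by linarith) m
  have h3 := (h1.sub h2).mul_left (1 / (2 * (m:ℝ)^2))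
  refine h3.congr' (fun i => ?_) ?_
  · have hi : (0:ℝ) ≤ i := by positivity
    have a1 : (l:ℝ) + 1 + i ≠ 0 := by positivity
    have a2 : (l:ℝ) - m + 1 + i ≠ 0 := by intro h; linarith
    have a3 : (l:ℝ) + 1 + i + m ≠ 0 := by positivity
    have a4 : ((l:ℝ) + 1 + i)^2 - (m:ℝ)^2 ≠ 0 := by
      have : ((l:ℝ) + 1 + i)^2 - (m:ℝ)^2 = ((l:ℝ) - m + 1 + i) * ((l:ℝ) + 1 + i + m) := by ring
      rw [this]; exact mul_ne_zero a2 a3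
    have a5 : (l:ℝ) - m + 1 + i + m ≠ 0 := by intro h; apply a1; linarith
    rw [show (l:ℝ) - m + 1 + i + m = (l:ℝ) + 1 + i by ring] 
    field_simp
    ring
  · rw [sum_sub_distrib]
    congr 2
    rw [← sum_range_reflect]
    refine sum_congr rfl fun j hj => ?_
    rw [mem_range] at hj
    rw [show m - 1 - j = m - (1 + j) by omega, Nat.cast_sub (by omega)]
    push_cast
    congr 1; ring

/-- the outer sum, with `m = M + 1` -/
lemma outer_l (M : ℕ) :
    HasSum (fun i : ℕ => 1 / ((M:ℝ) + 2 + i) *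
      ∑ j ∈ range (M + 1), (1 / ((M:ℝ) + 2 + i - j) - 1 / ((M:ℝ) + 2 + i + 1 + j)))
      ((∑' i : ℕ, 1 / ((M:ℝ) + 2 + i)^2) +
        (∑ j ∈ range M, ∑ i ∈ range (j + 1), 1 / (((M:ℝ) + 1 + i - j) * ((M:ℝ) + 2 + i)))
        - 1 / ((M:ℝ) + 1) * ∑ i ∈ range (M + 1), 1 / ((M:ℝ) + 2 + i)) := by
  have s1 : Summable (fun i : ℕ => 1 / ((M:ℝ) + 2 + i)^2) := by
    have := (summable_nat_add_iff (M + 2)).2 (Real.summable_one_div_nat_pow (p := 2).2 (by norm_num))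
    refine this.congr fun i => ?_
    push_cast; congr 2; ring
  have s2 : ∀ j ∈ range M, HasSum (fun i : ℕ => 1 / (((M:ℝ) + 1 + i - j) * ((M:ℝ) + 2 + i))
      - 1 / (((M:ℝ) + 2 + i) * ((M:ℝ) + 2 + i + 1 + j)))
      (∑ i ∈ range (j + 1), 1 / (((M:ℝ) + 1 + i - j) * ((M:ℝ) + 2 + i))) := by
    intro j hj
    rw [mem_range] at hj
    have hjr : (j:ℝ) + 1 ≤ M := by exact_mod_cast hj
    have := lag_hasSum (fun i : ℕ => 1 / (((M:ℝ) + 1 + i - j) * ((M:ℝ) + 2 + i))) ?_ ?_ (j + 1)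
    · refine this.congr' (fun i => ?_) rfl
      push_cast
      congr 2
      ring
    · intro a b hab
      have : (a : ℝ) ≤ b := by exact_mod_cast hab
      have ha : (0 : ℝ) ≤ a := by positivity
      dsimp only
      have e1 : (0:ℝ) < (M:ℝ) + 1 + a - j := by linarith
      have e2 : (0:ℝ) < (M:ℝ) + 1 + b - j := by linarith
      apply one_div_le_one_div_of_le
      · positivity
      · gcongr
    · have := (inv_tendsto ((M:ℝ) + 1 - j)).mul (inv_tendsto ((M:ℝ) + 2))
      rw [mul_zero] at this
      refine this.congr fun i => ?_
      rw [one_div_mul_one_div]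
      congr 2; ring
  have s3 := (inv_lag ((M:ℝ) + 2) (by positivity) (M + 1)).mul_left (1 / ((M:ℝ) + 1))
  have s4 := (s1.hasSum.add (hasSum_sum s2)).sub s3
  refine s4.congr' (fun i => ?_) rfl
  have p1 : ((M:ℝ) + 2 + i) ≠ 0 := by positivity
  have p2 : ((M:ℝ) + 2 + i + 1 + M) ≠ 0 := by positivity
  have p3 : ((M:ℝ) + 1) ≠ 0 := by positivity
  rw [sum_sub_distrib, sum_range_succ', sum_range_succ (fun j : ℕ => 1 / ((M:ℝ) + 2 + i + 1 + j)),
    sum_sub_distrib, mul_sub, mul_add, mul_add, mul_sum, mul_sum]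
  have q1 : ∑ j ∈ range M, 1 / ((M:ℝ) + 2 + i) * (1 / ((M:ℝ) + 2 + i - ((j + 1 : ℕ) : ℝ)))
      = ∑ j ∈ range M, 1 / (((M:ℝ) + 1 + i - j) * ((M:ℝ) + 2 + i)) := by
    refine sum_congr rfl fun j _ => ?_
    rw [one_div_mul_one_div, mul_comm]
    push_cast; congr 2; ring
  have q2 : ∑ j ∈ range M, 1 / ((M:ℝ) + 2 + i) * (1 / ((M:ℝ) + 2 + i + 1 + j))
      = ∑ j ∈ range M, 1 / (((M:ℝ) + 2 + i) * ((M:ℝ) + 2 + i + 1 + j)) := by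
    refine sum_congr rfl fun j _ => ?_
    rw [one_div_mul_one_div]
  have q3 : 1 / ((M:ℝ) + 1) * (1 / ((M:ℝ) + 2 + i) - 1 / ((M:ℝ) + 2 + i + ((M + 1 : ℕ) : ℝ)))
      = 1 / ((M:ℝ) + 2 + i) * (1 / ((M:ℝ) + 2 + i + 1 + M)) := by
    rw [show (M:ℝ) + 2 + i + ((M + 1 : ℕ) : ℝ) = (M:ℝ) + 2 + i + 1 + M by push_cast; ring]
    field_simp; ring
  have q4 : 1 / ((M:ℝ) + 2 + i) * (1 / ((M:ℝ) + 2 + i - ((0 : ℕ) : ℝ))) = 1 / ((M:ℝ) + 2 + i)^2 := by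
    rw [one_div_mul_one_div]; simp [sq]
  rw [q1, q2, q3, q4]
  ring

noncomputable def HH (n : ℕ) : ℝ := ∑ i ∈ range n, 1 / ((i:ℝ) + 1)
noncomputable def HH2 (n : ℕ) : ℝ := ∑ i ∈ range n, 1 / ((i:ℝ) + 1)^2

lemma HH_succ (n : ℕ) : HH (n + 1) = HH n + 1 / ((n:ℝ) + 1) := sum_range_succ _ _
lemma HH2_succ (n : ℕ) : HH2 (n + 1) = HH2 n + 1 / ((n:ℝ) + 1)^2 := sum_range_succ _ _

/-- `∑ 1/(i (M+1-i)) = 2 H_M/(M+1)` -/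
lemma conv_inv (M : ℕ) :
    ∑ p ∈ range M, 1 / ((p:ℝ) + 1) * (1 / ((M:ℝ) - p)) = 2 * HH M / (M + 1) := by
  have h1 : ∑ p ∈ range M, 1 / ((M:ℝ) - p) = HH M := by
    rw [HH, ← sum_range_reflect]
    refine sum_congr rfl fun p hp => ?_
    rw [mem_range] at hp
    rw [show M - 1 - p = M - (1 + p) by omega, Nat.cast_sub (by omega)]
    push_cast; congr 1; ring
  have h2 : ∀ p ∈ range M, 1 / ((p:ℝ) + 1) * (1 / ((M:ℝ) - p))
      = (1 / ((p:ℝ) + 1) + 1 / ((M:ℝ) - p)) / (M + 1) := by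
    intro p hp
    rw [mem_range] at hp
    have : (p:ℝ) + 1 ≤ M := by exact_mod_cast hp
    have a : (M:ℝ) - p ≠ 0 := by linarith
    have b : (p:ℝ) + 1 ≠ 0 := by positivity
    have c : (M:ℝ) + 1 ≠ 0 := by positivity
    field_simp; ring
  rw [sum_congr rfl h2, ← sum_div, sum_add_distrib, h1, ← HH]
  ring

/-- convolution, reflected index: `∑_{i=1}^{M} H_{M+1-i}/i` -/
lemma conv_H (M : ℕ) :
    ∑ i ∈ range M, 1 / ((i:ℝ) + 1) * HH (M - i) = HH (M + 1) ^ 2 - HH2 (M + 1) := by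
  induction M with
  | zero => simp [HH, HH2]
  | succ M ih =>
    rw [HH_succ (M+1), HH2_succ (M+1)]
    have h : ∑ i ∈ range (M+1), 1 / ((i:ℝ) + 1) * HH (M + 1 - i)
       = ∑ i ∈ range M, 1 / ((i:ℝ) + 1) * HH (M - i)
         + ∑ i ∈ range (M+1), 1 / ((i:ℝ) + 1) * (1 / (((M+1:ℕ):ℝ) - i)) := by
      have h0 : ∑ i ∈ range M, 1 / ((i:ℝ) + 1) * HH (M - i)
          = ∑ i ∈ range (M+1), 1 / ((i:ℝ) + 1) * HH (M - i) := by
        rw [sum_range_succ]; simp [HH]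
      rw [h0, ← sum_add_distrib]
      refine sum_congr rfl fun i hi => ?_
      rw [mem_range] at hi
      rw [show M + 1 - i = (M - i) + 1 by omega, HH_succ, Nat.cast_sub (by omega), mul_add]
      push_cast; congr 3; ring
    rw [h, ih, conv_inv]
    push_cast
    have c : (M:ℝ) + 1 + 1 ≠ 0 := by positivity
    field_simp
    ring

lemma conv_final (M : ℕ) :
    ∑ p ∈ range M, (HH M - HH (p + 1)) / ((M:ℝ) - p) = HH2 M - 2 * HH M / (M + 1) := by
  have h1 : ∑ p ∈ range M, 1 / ((M:ℝ) - p) = HH M := by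
    rw [HH, ← sum_range_reflect]
    refine sum_congr rfl fun p hp => ?_
    rw [mem_range] at hp
    rw [show M - 1 - p = M - (1 + p) by omega, Nat.cast_sub (by omega)]
    push_cast; congr 1; ring
  have h2 : ∑ p ∈ range M, HH (p + 1) * (1 / ((M:ℝ) - p)) = HH (M + 1) ^ 2 - HH2 (M + 1) := by
    rw [← conv_H, ← sum_range_reflect]
    refine sum_congr rfl fun p hp => ?_
    rw [mem_range] at hp
    rw [show M - 1 - p + 1 = M - p by omega, show M - 1 - p = M - (1 + p) by omega,
      Nat.cast_sub (by omega), mul_comm]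
    push_cast; congr 2; ring
  have h3 : ∀ p ∈ range M, (HH M - HH (p + 1)) / ((M:ℝ) - p)
      = HH M * (1 / ((M:ℝ) - p)) - HH (p+1) * (1 / ((M:ℝ) - p)) := by
    intro p _; ring
  rw [sum_congr rfl h3, sum_sub_distrib, ← mul_sum, h1, h2, HH_succ, HH2_succ]
  have c : (M:ℝ) + 1 ≠ 0 := by positivity
  field_simp; ring

lemma swap_sum (M : ℕ) :
    ∑ j ∈ range M, ∑ i ∈ range (j + 1), 1 / (((M:ℝ) + 1 + i - j) * ((M:ℝ) + 2 + i))
    = ∑ p ∈ range M, (HH (M + 1) - HH (p + 1)) / ((M:ℝ) + 2 + p) := by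
  have h : ∀ p ∈ range M, HH (M + 1) - HH (p + 1) = ∑ j ∈ Ico p M, 1 / ((M:ℝ) + 1 + p - j) := by
    intro p hp
    rw [mem_range] at hp
    rw [HH, HH, ← sum_Ico_eq_sub _ (by omega)]
    refine sum_bij' (fun j _ => M + p - j) (fun j _ => M + p - j) ?_ ?_ ?_ ?_ ?_
    · intro a ha; rw [mem_Ico] at *; omega
    · intro a ha; rw [mem_Ico] at *; omega
    · intro a ha; rw [mem_Ico] at *; omega
    · intro a ha; rw [mem_Ico] at *; omega
    · intro a ha; rw [mem_Ico] at *
      rw [Nat.cast_sub (by omega)]; push_cast; congr 1; ring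
  rw [sum_comm' (t' := range M) (s' := fun i => Ico i M)]
  · refine sum_congr rfl fun p hp => ?_
    rw [h p hp, sum_div]
    refine sum_congr rfl fun j hj => ?_
    rw [div_div]
  · intro x y
    simp only [mem_range, mem_Ico]; omega

/-- the finite identity -/
lemma finite_id (M : ℕ) :
    ((∑ j ∈ range M, ∑ i ∈ range (j + 1), 1 / (((M:ℝ) + 1 + i - j) * ((M:ℝ) + 2 + i)))
        - 1 / ((M:ℝ) + 1) * ∑ i ∈ range (M + 1), 1 / ((M:ℝ) + 2 + i))
    = 2 * ((M:ℝ) + 1) * (∑ p ∈ range M, (HH M - HH (p+1)) / (((M:ℝ)+1)^2 - ((p:ℝ)+1)^2))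
      + 2 * HH M / (M + 1) - HH2 M - 1 / (2 * ((M:ℝ)+1)^2) := by
  have c : (M:ℝ) + 1 ≠ 0 := by positivity
  have h1 : 2 * ((M:ℝ) + 1) * (∑ p ∈ range M, (HH M - HH (p+1)) / (((M:ℝ)+1)^2 - ((p:ℝ)+1)^2))
      = ∑ p ∈ range M, (HH M - HH (p + 1)) / ((M:ℝ) - p)
        + ∑ p ∈ range M, (HH M - HH (p + 1)) / ((M:ℝ) + 2 + p) := by
    rw [mul_sum, ← sum_add_distrib]
    refine sum_congr rfl fun p hp => ?_
    rw [mem_range] at hp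
    have : (p:ℝ) + 1 ≤ M := by exact_mod_cast hp
    have a : (M:ℝ) - p ≠ 0 := by linarith
    have b : (M:ℝ) + 2 + p ≠ 0 := by positivity
    rw [show ((M:ℝ)+1)^2 - ((p:ℝ)+1)^2 = ((M:ℝ) - p) * ((M:ℝ) + 2 + p) by ring]
    field_simp; ring
  rw [h1, conv_final, swap_sum]
  have h2 : ∑ p ∈ range M, (HH (M + 1) - HH (p + 1)) / ((M:ℝ) + 2 + p)
      = ∑ p ∈ range M, (HH M - HH (p + 1)) / ((M:ℝ) + 2 + p)
        + 1 / ((M:ℝ)+1) * ∑ p ∈ range M, 1 / ((M:ℝ) + 2 + p) := by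
    rw [mul_sum, ← sum_add_distrib]
    refine sum_congr rfl fun p hp => ?_
    rw [HH_succ]
    ring
  rw [h2, sum_range_succ]
  have b : (M:ℝ) + 2 + M ≠ 0 := by positivity
  rw [show (M:ℝ) + 2 + M = 2 * (M + 1) by ring]
  field_simp; ring

noncomputable def KK (k l m : ℕ) : ℝ :=
  if 0 < m ∧ m < l ∧ l < k then 1 / ((k:ℝ) * l * ((k:ℝ)^2 - (m:ℝ)^2)) else 0

noncomputable def fA (m : ℕ) : ℝ≥0∞ := ∑' (l : ℕ) (k : ℕ), ENNReal.ofReal (KK k l m)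
noncomputable def gB (k : ℕ) : ℝ≥0∞ := ∑' (l : ℕ) (m : ℕ), ENNReal.ofReal (KK k l m)
noncomputable def q22 (k : ℕ) : ℝ≥0∞ :=
  ∑' (l : ℕ), ENNReal.ofReal (if 0 < l ∧ l < k then 1 / (k:ℝ)^2 * (1 / (l:ℝ)^2) else 0)
noncomputable def q31 (k : ℕ) : ℝ≥0∞ :=
  ∑' (l : ℕ), ENNReal.ofReal (if 0 < l ∧ l < k then 1 / (k:ℝ)^3 * (1 / (l:ℝ)) else 0)
noncomputable def q4 (k : ℕ) : ℝ≥0∞ := ENNReal.ofReal (if 0 < k then 1 / (k:ℝ)^4 else 0)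
noncomputable def qt (m : ℕ) : ℝ≥0∞ :=
  ∑' (k : ℕ), ENNReal.ofReal (if 0 < m ∧ m < k then 1 / (k:ℝ)^2 * (1 / (m:ℝ)^2) else 0)

noncomputable def tail (M : ℕ) : ℝ := ∑' i : ℕ, 1 / ((M:ℝ) + 2 + i)^2

noncomputable def XX (M : ℕ) : ℝ := ((tail M) +
        (∑ j ∈ range M, ∑ i ∈ range (j + 1), 1 / (((M:ℝ) + 1 + i - j) * ((M:ℝ) + 2 + i)))
        - 1 / ((M:ℝ) + 1) * ∑ i ∈ range (M + 1), 1 / ((M:ℝ) + 2 + i))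

lemma hasSum_ofReal {f : ℕ → ℝ} {a : ℝ} (h : HasSum f a) (h0 : ∀ i, 0 ≤ f i) :
    ∑' i, ENNReal.ofReal (f i) = ENNReal.ofReal a := by
  rw [← h.tsum_eq, ENNReal.ofReal_tsum_of_nonneg h0 h.summable]

lemma fin_sum (M : ℕ) (F : ℕ → ℝ) (hF : ∀ i, i < M → 0 ≤ F (i + 1)) :
    ∑' l, ENNReal.ofReal (if 0 < l ∧ l < M + 1 then F l else 0)
      = ENNReal.ofReal (∑ i ∈ range M, F (i + 1)) := by
  rw [tsum_eq_zero_add' ENNReal.summable, tsum_eq_sum (s := range M)]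
  · rw [ENNReal.ofReal_sum_of_nonneg (fun i hi => hF i (mem_range.1 hi))]
    simp only [lt_irrefl, false_and, if_false, ENNReal.ofReal_zero, zero_add]
    refine sum_congr rfl fun i hi => ?_
    rw [mem_range] at hi
    rw [if_pos (by omega)]
  · intro b hb
    rw [mem_range] at hb
    rw [if_neg (by omega), ENNReal.ofReal_zero]

lemma inner_nonneg (m l : ℕ) (hl : m < l) (i : ℕ) :
    0 ≤ 1 / (((l:ℝ) + 1 + i) * (((l:ℝ) + 1 + i)^2 - (m:ℝ)^2)) := by
  have hlr : (m:ℝ) + 1 ≤ l := by exact_mod_cast hl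
  have hi : (0:ℝ) ≤ i := by positivity
  have hm : (0:ℝ) ≤ m := by positivity
  have : 0 ≤ ((l:ℝ) + 1 + i)^2 - (m:ℝ)^2 := by
    rw [sub_nonneg]; gcongr; linarith
  positivity

lemma fA_val (M : ℕ) : 0 ≤ XX M ∧
    fA (M + 1) = ENNReal.ofReal (1 / (2 * ((M:ℝ) + 1)^2) * XX M) := by
  have hin : ∀ l : ℕ, M + 1 < l → 
      0 ≤ 1 / (2 * ((M+1:ℕ):ℝ)^2) * ∑ j ∈ range (M + 1), (1 / ((l:ℝ) - j) - 1 / ((l:ℝ) + 1 + j)) :=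
    fun l hl => (inner_k (M + 1) l (by omega) hl).nonneg (inner_nonneg _ _ hl)
  have h1 : ∀ l : ℕ, ∑' k, ENNReal.ofReal (KK k l (M + 1)) = if M + 1 < l then
      ENNReal.ofReal (1 / (2 * ((M:ℝ) + 1)^2) * (1 / (l:ℝ) *
        ∑ j ∈ range (M + 1), (1 / ((l:ℝ) - j) - 1 / ((l:ℝ) + 1 + j)))) else 0 := by
    intro l
    split_ifs with hl
    · have e : ∀ k : ℕ, ENNReal.ofReal (KK k l (M + 1)) = if l < k then
          ENNReal.ofReal (1 / (l:ℝ) * (1 / ((k:ℝ) * ((k:ℝ)^2 - ((M+1:ℕ):ℝ)^2)))) else 0 := by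
        intro k
        by_cases h : l < k
        · rw [KK, if_pos ⟨by omega, hl, h⟩, if_pos h]
          congr 1
          rw [one_div_mul_one_div]
          congr 1; ring
        · rw [KK, if_neg (by tauto), if_neg h, ENNReal.ofReal_zero]
      simp_rw [e]
      rw [tsum_ite_lt]
      have h2 := (inner_k (M + 1) l (by omega) hl).mul_left (1 / (l:ℝ))
      rw [← hasSum_ofReal (h2.congr' (fun i => rfl) (by push_cast; ring))]
      · refine tsum_congr fun i => ?_
        push_cast; rfl
      · intro i
        have := inner_nonneg (M + 1) l hl i
        positivity
    · have e : ∀ k : ℕ, KK k l (M + 1) = 0 := fun k => by rw [KK, if_neg (by tauto)]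
      simp [e]
  have h3 := outer_l M
  have hnn : ∀ i : ℕ, 0 ≤ 1 / ((M:ℝ) + 2 + i) *
      ∑ j ∈ range (M + 1), (1 / ((M:ℝ) + 2 + i - j) - 1 / ((M:ℝ) + 2 + i + 1 + j)) := by
    intro i
    have := hin (M + 2 + i) (by omega)
    have h4 : (0:ℝ) < 1 / (2 * ((M+1:ℕ):ℝ)^2) := by positivity
    have := nonneg_of_mul_nonneg_right this h4
    push_cast at this
    positivity
  refine ⟨h3.nonneg hnn, ?_⟩
  rw [fA]
  simp_rw [h1]
  rw [tsum_ite_lt]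
  rw [XX, tail, ← hasSum_ofReal (h3.mul_left (1 / (2 * ((M:ℝ) + 1)^2)))]
  · refine tsum_congr fun i => ?_
    push_cast
    rw [show (M:ℝ) + 1 + 1 = M + 2 by ring]
  · intro i
    have := hnn i
    positivity

lemma HH_sub (M m : ℕ) (h : m ≤ M) : 
    ∑ i ∈ range M, (if m < i + 1 then 1 / ((i:ℝ) + 1) else 0) = HH M - HH m := by
  rw [HH, HH, ← sum_Ico_eq_sub _ h, ← sum_filter]
  refine sum_congr ?_ fun _ _ => rfl
  ext i; simp only [mem_filter, mem_range, mem_Ico]; omega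

lemma HH_mono {m M : ℕ} (h : m ≤ M) : 0 ≤ HH M - HH m := by
  rw [← HH_sub M m h]
  refine sum_nonneg fun i _ => ?_
  split_ifs <;> positivity

lemma gB_nonneg (M p : ℕ) (hp : p < M) :
    0 ≤ (HH M - HH (p+1)) / (((M:ℝ)+1)^2 - ((p:ℝ)+1)^2) := by
  have := HH_mono (show p + 1 ≤ M by omega)
  have hpr : (p:ℝ) ≤ M := by exact_mod_cast hp.le
  have : 0 ≤ ((M:ℝ)+1)^2 - ((p:ℝ)+1)^2 := by
    rw [sub_nonneg]; gcongr
  positivity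

lemma gB_val (M : ℕ) : gB (M + 1) = ENNReal.ofReal (1 / ((M:ℝ)+1) *
    ∑ p ∈ range M, (HH M - HH (p+1)) / (((M:ℝ)+1)^2 - ((p:ℝ)+1)^2)) := by
  rw [gB, ENNReal.tsum_comm]
  have h1 : ∀ m : ℕ, ∑' l, ENNReal.ofReal (KK (M+1) l m) = ENNReal.ofReal
      (if 0 < m ∧ m < M + 1 then 1 / ((M:ℝ)+1) * ((HH M - HH m) / (((M:ℝ)+1)^2 - (m:ℝ)^2)) else 0) := by
    intro m
    split_ifs with hm
    · have hmr : (m:ℝ) ≤ M := by exact_mod_cast (Nat.lt_succ_iff.1 hm.2)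
      have hd : 0 ≤ ((M:ℝ)+1)^2 - (m:ℝ)^2 := by
        rw [sub_nonneg]; gcongr; linarith
      have := fin_sum M (fun l => if m < l then 1 / (((M:ℝ)+1) * l * (((M:ℝ)+1)^2 - (m:ℝ)^2)) else 0) ?_
      · rw [← HH_sub M m (by omega), sum_div, mul_sum]
        convert this using 1
        · refine tsum_congr fun l => ?_
          congr 1
          rw [KK]
          push_cast
          by_cases h : m < l ∧ l < M + 1
          · rw [if_pos (by omega), if_pos (by omega), if_pos (by omega)]
          · rw [if_neg (by tauto)]
            split_ifs <;> first | rfl | omega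
        · congr 1
          refine sum_congr rfl fun i _ => ?_
          split_ifs
          · rw [div_div, one_div_mul_one_div]
            push_cast
            congr 1; ring
          · simp
      · intro i _
        split_ifs <;> positivity
    · have e : ∀ l : ℕ, KK (M+1) l m = 0 := fun l => by rw [KK, if_neg (by omega)]
      simp [e]
  simp_rw [h1]
  rw [fin_sum, mul_sum]
  · push_cast; rfl
  · intro i hi
    have := gB_nonneg M i hi
    push_cast
    positivity

lemma q22_val (M : ℕ) : q22 (M + 1) = ENNReal.ofReal (1 / ((M:ℝ)+1)^2 * HH2 M) := by
  rw [q22, fin_sum, HH2, mul_sum]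
  · push_cast; rfl
  · intros; positivity

lemma q31_val (M : ℕ) : q31 (M + 1) = ENNReal.ofReal (1 / ((M:ℝ)+1)^3 * HH M) := by
  rw [q31, fin_sum, HH, mul_sum]
  · push_cast; rfl
  · intros; positivity

lemma qt_val (M : ℕ) : qt (M + 1) = ENNReal.ofReal (1 / ((M:ℝ)+1)^2 * tail M) := by
  have s1 : Summable (fun i : ℕ => 1 / ((M:ℝ) + 2 + i)^2) := by
    have := (summable_nat_add_iff (M + 2)).2 (Real.summable_one_div_nat_pow (p := 2).2 (by norm_num))
    refine this.congr fun i => ?_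
    push_cast; congr 2; ring
  rw [qt, tail, ← hasSum_ofReal (s1.hasSum.mul_left _) (fun i => by positivity)]
  have e : ∀ k : ℕ, ENNReal.ofReal (if 0 < M + 1 ∧ M + 1 < k then 1 / (k:ℝ)^2 * (1 / ((M + 1 : ℕ):ℝ)^2) else 0)
      = if M + 1 < k then ENNReal.ofReal (1 / (k:ℝ)^2 * (1 / ((M + 1 : ℕ):ℝ)^2)) else 0 := by
    intro k
    split_ifs <;> first | rfl | omega | simp
  simp_rw [e]
  rw [tsum_ite_lt]
  refine tsum_congr fun i => ?_
  push_cast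
  rw [mul_comm, show (M:ℝ) + 1 + 1 = M + 2 by ring]

lemma key (m : ℕ) : 4 * fA m + 2 * q22 m + q4 m = 4 * gB m + 4 * q31 m + 2 * qt m := by
  cases m with
  | zero => simp [fA, gB, q22, q31, q4, qt, KK]
  | succ M =>
    obtain ⟨hX, hf⟩ := fA_val M
    have hg : 0 ≤ ∑ p ∈ range M, (HH M - HH (p+1)) / (((M:ℝ)+1)^2 - ((p:ℝ)+1)^2) :=
      sum_nonneg fun p hp => gB_nonneg M p (mem_range.1 hp)
    have hH : 0 ≤ HH M := sum_nonneg fun _ _ => by positivity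
    have hH2 : 0 ≤ HH2 M := sum_nonneg fun _ _ => by positivity
    have ht : 0 ≤ tail M := tsum_nonneg fun _ => by positivity
    rw [hf, gB_val, q22_val, q31_val, qt_val, q4, if_pos (Nat.succ_pos M)]
    rw [show (4:ℝ≥0∞) = ENNReal.ofReal 4 by norm_num, show (2:ℝ≥0∞) = ENNReal.ofReal 2 by norm_num]
    simp only [← ENNReal.ofReal_mul (show (0:ℝ) ≤ 4 by norm_num),
      ← ENNReal.ofReal_mul (show (0:ℝ) ≤ 2 by norm_num)]
    rw [← ENNReal.ofReal_add (by positivity) (by positivity), ← ENNReal.ofReal_add (by positivity) (by positivity),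
      ← ENNReal.ofReal_add (by positivity) (by positivity), ← ENNReal.ofReal_add (by positivity) (by positivity)]
    congr 1
    have hid := finite_id M
    rw [XX, add_sub_assoc, hid]
    have c : (M:ℝ) + 1 ≠ 0 := by positivity
    push_cast
    field_simp
    ring

lemma gB_le (m : ℕ) : gB m ≤ q22 m := by
  cases m with
  | zero => simp [gB, q22, KK]
  | succ M =>
    rw [gB_val, q22_val]
    apply ENNReal.ofReal_le_ofReal
    have hH : 0 ≤ HH M := sum_nonneg fun _ _ => by positivity
    have h1 : HH2 M ≥ ∑ p ∈ range M, (HH M - HH (p + 1)) / ((M:ℝ) - p) := by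
      rw [conv_final]
      have : 0 ≤ 2 * HH M / (M + 1) := by positivity
      linarith
    have h2 : 1 / ((M:ℝ)+1) * ∑ p ∈ range M, (HH M - HH (p+1)) / (((M:ℝ)+1)^2 - ((p:ℝ)+1)^2)
       ≤ 1 / ((M:ℝ)+1)^2 * ∑ p ∈ range M, (HH M - HH (p + 1)) / ((M:ℝ) - p) := by
      rw [mul_sum, mul_sum]
      refine sum_le_sum fun p hp => ?_
      rw [mem_range] at hp
      have a0 := HH_mono (show p + 1 ≤ M by omega)
      have : (p:ℝ) + 1 ≤ M := by exact_mod_cast hp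
      have a : 0 < (M:ℝ) - p := by linarith
      rw [div_mul_div_comm, div_mul_div_comm, one_mul]
      apply div_le_div_of_nonneg_left a0 (by positivity)
      have hp0 : (0:ℝ) ≤ p := by positivity
      rw [show ((M:ℝ)+1)^2 - ((p:ℝ)+1)^2 = ((M:ℝ) - p) * ((M:ℝ) + 1 + (p + 1)) by ring]
      have : 0 ≤ ((M:ℝ)+1) * ((M:ℝ) - p) * (p + 1) := by positivity
      nlinarith
    refine h2.trans ?_
    gcongr

lemma q31_le (m : ℕ) : q31 m ≤ q22 m := by
  refine ENNReal.tsum_le_tsum fun l => ENNReal.ofReal_le_ofReal ?_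
  split_ifs with h
  · have h1 : (0:ℝ) < l := by exact_mod_cast h.1
    have h2 : (l:ℝ) ≤ m := by exact_mod_cast h.2.le
    have h3 : (0:ℝ) < m := by linarith
    rw [one_div_mul_one_div, one_div_mul_one_div]
    apply one_div_le_one_div_of_le (by positivity)
    have : (m:ℝ)^2 * l^2 = m^2 * l * l := by ring
    rw [this, show (m:ℝ)^3 * l = m^2 * l * m by ring]
    gcongr
  · exact le_rfl

lemma z2_fin : ∑' k : ℕ, ENNReal.ofReal (1 / (k:ℝ)^2) ≠ ⊤ := by
  rw [← ENNReal.ofReal_tsum_of_nonneg (fun _ => by positivity)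
    (Real.summable_one_div_nat_pow.2 (by norm_num))]
  exact ENNReal.ofReal_ne_top

lemma q22_fin : ∑' k, q22 k ≠ ⊤ := by
  have : ∑' k, q22 k ≤ (∑' k : ℕ, ENNReal.ofReal (1 / (k:ℝ)^2)) * ∑' k : ℕ, ENNReal.ofReal (1 / (k:ℝ)^2) := by
    rw [← ENNReal.tsum_mul_right]
    refine ENNReal.tsum_le_tsum fun k => ?_
    rw [← ENNReal.tsum_mul_left]
    refine ENNReal.tsum_le_tsum fun l => ?_
    rw [← ENNReal.ofReal_mul (by positivity)]
    apply ENNReal.ofReal_le_ofReal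
    split_ifs
    · exact le_rfl
    · positivity
  exact ne_top_of_le_ne_top (ENNReal.mul_ne_top z2_fin z2_fin) this

lemma qt_sum : ∑' m, qt m = ∑' k, q22 k := by
  simp only [qt, q22]
  rw [ENNReal.tsum_comm]

lemma q4_fin : ∑' k, q4 k ≠ ⊤ := by
  refine ne_top_of_le_ne_top z2_fin (ENNReal.tsum_le_tsum fun k => ENNReal.ofReal_le_ofReal ?_)
  split_ifs with h
  · have : (1:ℝ) ≤ k := by exact_mod_cast h
    apply one_div_le_one_div_of_le (by positivity)
    gcongr
    norm_num
  · positivity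

noncomputable def xx (n k : ℕ) : ℝ≥0∞ := ENNReal.ofReal ((1 / (k:ℝ))^(2*n))

lemma xx_le (n k : ℕ) : xx n k ≤ 1 := by
  rw [xx, ← ENNReal.ofReal_one]
  apply ENNReal.ofReal_le_ofReal
  apply pow_le_one₀ (by positivity)
  rcases Nat.eq_zero_or_pos k with h | h
  · simp [h]
  · have : (1:ℝ) ≤ k := by exact_mod_cast h
    rw [div_le_one (by positivity)]; exact this

lemma xx_fin (n : ℕ) {q : ℕ → ℝ≥0∞} (h : ∑' k, q k ≠ ⊤) : ∑' k, xx n k * q k ≠ ⊤ :=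
  ne_top_of_le_ne_top h (ENNReal.tsum_le_tsum fun k => by
    calc xx n k * q k ≤ 1 * q k := by gcongr; exact xx_le n k
      _ = q k := one_mul _)

lemma T2_a (n : ℕ) : T2 (2*n+3) 1 = ∑' k, xx n k * q31 k := by
  rw [T2]
  refine tsum_congr fun k => ?_
  rw [q31, ← ENNReal.tsum_mul_left]
  refine tsum_congr fun l => ?_
  rw [xx, ← ENNReal.ofReal_mul (by positivity)]
  congr 1
  rw [mul_ite, mul_zero]
  split_ifs
  · rw [one_div_pow, ← mul_assoc, one_div_mul_one_div ((k:ℝ)^(2*n)), ← pow_add, pow_one]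
  · rfl

lemma T2_b (n : ℕ) : T2 (2*n+2) 2 = ∑' k, xx n k * q22 k := by
  rw [T2]
  refine tsum_congr fun k => ?_
  rw [q22, ← ENNReal.tsum_mul_left]
  refine tsum_congr fun l => ?_
  rw [xx, ← ENNReal.ofReal_mul (by positivity)]
  congr 1
  rw [mul_ite, mul_zero]
  split_ifs
  · rw [one_div_pow, ← mul_assoc, one_div_mul_one_div ((k:ℝ)^(2*n)), ← pow_add]
  · rfl

lemma T2_c (n : ℕ) : T2 2 (2*n+2) = ∑' k, xx n k * qt k := by
  rw [T2, ENNReal.tsum_comm]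
  refine tsum_congr fun k => ?_
  rw [qt, ← ENNReal.tsum_mul_left]
  refine tsum_congr fun l => ?_
  rw [xx, ← ENNReal.ofReal_mul (by positivity)]
  congr 1
  rw [mul_ite, mul_zero]
  split_ifs
  · rw [one_div_pow, mul_left_comm, one_div_mul_one_div ((k:ℝ)^(2*n)), ← pow_add]
  · rfl

lemma T1_a (n : ℕ) : T1 (2*n+4) = ∑' k, xx n k * q4 k := by
  rw [T1]
  refine tsum_congr fun k => ?_
  rw [xx, q4, ← ENNReal.ofReal_mul (by positivity)]
  congr 1
  rw [mul_ite, mul_zero]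
  split_ifs
  · rw [one_div_pow, one_div_mul_one_div, ← pow_add]
  · rfl

lemma geom (n : ℕ) (x y D : ℝ) (hD : D * y^2 - D * x^2 = x^2 * y^2) :
    ∑ i ∈ range n, x^(2*i+3) * y^(2*n-2*i) + x * D * x^(2*n) = x * D * y^(2*n) := by
  induction n with
  | zero => simp
  | succ n ih =>
    rw [sum_range_succ]
    have : ∑ i ∈ range n, x^(2*i+3) * y^(2*(n+1)-2*i) = y^2 * ∑ i ∈ range n, x^(2*i+3) * y^(2*n-2*i) := by
      rw [mul_sum]
      refine sum_congr rfl fun i hi => ?_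
      rw [mem_range] at hi
      rw [show 2*(n+1)-2*i = (2*n-2*i) + 2 by omega, pow_add]; ring
    rw [this, show 2*(n+1)-2*n = 2 by omega, eq_sub_of_add_eq ih]
    linear_combination (-x^(2*n+1)) * hD

lemma S_add_B (n : ℕ) : ∑ i ∈ range n, T3 (2*i+3) 1 (2*n-2*i) + ∑' k, xx n k * gB k
    = ∑' m, xx n m * fA m := by
  have hA : ∑' m, xx n m * fA m = ∑' (k : ℕ) (l : ℕ) (m : ℕ), xx n m * ENNReal.ofReal (KK k l m) := by
    simp_rw [fA, ← ENNReal.tsum_mul_left]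
    rw [ENNReal.tsum_comm]
    conv_rhs => rw [ENNReal.tsum_comm]
    refine tsum_congr fun l => ?_
    rw [ENNReal.tsum_comm]
  have hB : ∑' k, xx n k * gB k = ∑' (k : ℕ) (l : ℕ) (m : ℕ), xx n k * ENNReal.ofReal (KK k l m) := by
    simp_rw [gB, ← ENNReal.tsum_mul_left]
  have hS : ∑ i ∈ range n, T3 (2*i+3) 1 (2*n-2*i) = ∑' (k : ℕ) (l : ℕ) (m : ℕ),
      ∑ i ∈ range n, ENNReal.ofReal (if 0 < m ∧ m < l ∧ l < k then
        1 / (k:ℝ)^(2*i+3) * (1 / (l:ℝ)^1 * (1 / (m:ℝ)^(2*n-2*i))) else 0) := by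
    simp_rw [Summable.tsum_finsetSum (fun _ _ => ENNReal.summable), T3]
  rw [hA, hB, hS]
  simp_rw [← ENNReal.tsum_add]
  refine tsum_congr fun k => tsum_congr fun l => tsum_congr fun m => ?_
  rw [KK]
  split_ifs with h
  · have h1 : (0:ℝ) < m := by exact_mod_cast h.1
    have h2 : (m:ℝ) < l := by exact_mod_cast h.2.1
    have h3 : (l:ℝ) < k := by exact_mod_cast h.2.2
    have h4 : (0:ℝ) < l := by linarith
    have h5 : (0:ℝ) < k := by linarith
    have h6 : (0:ℝ) < (k:ℝ)^2 - (m:ℝ)^2 := by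
      rw [sub_pos]; gcongr; linarith
    rw [← ENNReal.ofReal_sum_of_nonneg (fun _ _ => by positivity), xx, xx,
      ← ENNReal.ofReal_mul (by positivity), ← ENNReal.ofReal_mul (by positivity),
      ← ENNReal.ofReal_add (sum_nonneg fun _ _ => by positivity) (by positivity)]
    congr 1
    have hg := geom n (1 / (k:ℝ)) (1 / (m:ℝ)) (1 / ((k:ℝ)^2 - (m:ℝ)^2)) (by field_simp)
    have e : ∑ i ∈ range n, 1 / (k:ℝ)^(2*i+3) * (1 / (l:ℝ)^1 * (1 / (m:ℝ)^(2*n-2*i)))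
        = (1 / (l:ℝ)) * ∑ i ∈ range n, (1 / (k:ℝ))^(2*i+3) * (1 / (m:ℝ))^(2*n-2*i) := by
      rw [mul_sum]
      refine sum_congr rfl fun i _ => ?_
      rw [one_div_pow, one_div_pow, pow_one]; ring
    rw [e, eq_sub_of_add_eq hg, ← one_div_mul_one_div, ← one_div_mul_one_div]
    ring
  · simp

lemma main_n (n : ℕ) : ∑ i ∈ range n, mzv ![2*i+3, 1, 2*n-2*i]
    = mzv ![2*n+3, 1] + (1 / 2) * (mzv ![2, 2*n+2] - mzv ![2*n+2, 2]) - (1 / 4) * mzv ![2*n+4] := by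
  simp_rw [mzv3, mzv2, mzv1]
  have k1 : 4 * ∑' m, xx n m * fA m + 2 * T2 (2*n+2) 2 + T1 (2*n+4)
      = 4 * ∑' m, xx n m * gB m + 4 * T2 (2*n+3) 1 + 2 * T2 2 (2*n+2) := by
    rw [T2_a, T2_b, T2_c, T1_a]
    simp_rw [← ENNReal.tsum_mul_left, ← ENNReal.tsum_add]
    refine tsum_congr fun m => ?_
    calc _ = xx n m * (4 * fA m + 2 * q22 m + q4 m) := by ring
      _ = _ := by rw [key]; ring
  have f1 : T2 (2*n+3) 1 ≠ ⊤ := by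
    rw [T2_a]; exact xx_fin n (ne_top_of_le_ne_top q22_fin (ENNReal.tsum_le_tsum q31_le))
  have f2 : T2 (2*n+2) 2 ≠ ⊤ := by rw [T2_b]; exact xx_fin n q22_fin
  have f3 : T2 2 (2*n+2) ≠ ⊤ := by
    rw [T2_c]; apply xx_fin n; rw [qt_sum]; exact q22_fin
  have f4 : T1 (2*n+4) ≠ ⊤ := by rw [T1_a]; exact xx_fin n q4_fin
  have f5 : ∑' m, xx n m * gB m ≠ ⊤ :=
    xx_fin n (ne_top_of_le_ne_top q22_fin (ENNReal.tsum_le_tsum gB_le))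
  have k2 := S_add_B n
  have f6 : ∑' m, xx n m * fA m ≠ ⊤ := by
    intro h
    rw [h] at k1
    have : (4 * ∑' m, xx n m * gB m + 4 * T2 (2*n+3) 1 + 2 * T2 2 (2*n+2)) ≠ ⊤ := by
      finiteness
    apply this
    rw [← k1]
    simp
  have f7 : ∑ i ∈ range n, T3 (2*i+3) 1 (2*n-2*i) ≠ ⊤ :=
    ne_top_of_le_ne_top f6 (k2 ▸ le_self_add)
  have f8 : ∀ i ∈ range n, T3 (2*i+3) 1 (2*n-2*i) ≠ ⊤ := fun i hi =>
    ne_top_of_le_ne_top f7 (single_le_sum_of_canonicallyOrdered 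
      (f := fun i => T3 (2*i+3) 1 (2*n-2*i)) hi)
  rw [← ENNReal.toReal_sum f8]
  have r1 := congrArg ENNReal.toReal k1
  have r2 := congrArg ENNReal.toReal k2
  rw [ENNReal.toReal_add f7 f5] at r2
  rw [ENNReal.toReal_add (by finiteness) f4, ENNReal.toReal_add (by finiteness) (by finiteness),
    ENNReal.toReal_add (by finiteness) (by finiteness),
    ENNReal.toReal_add (by finiteness) (by finiteness)] at r1
  simp only [ENNReal.toReal_mul, ENNReal.toReal_ofNat] at r1
  linarith

theorem sum_a1c_a_odd (w : ℕ) (hw : 4 ≤ w) (hew : Even w) :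
    (∑ a ∈ (Finset.Icc 2 (w - 2)).filter (fun a => Odd a), mzv ![a, 1, w - 1 - a])
    = mzv ![w - 1, 1] + (1 / 2) * (mzv ![2, w - 2] - mzv ![w - 2, 2]) - (1 / 4) * mzv ![w] := by
  obtain ⟨n, rfl⟩ : ∃ n, w = 2 * n + 4 := by
    obtain ⟨r, hr⟩ := hew
    exact ⟨r - 2, by omega⟩
  have := main_n n
  rw [show 2 * n + 4 - 1 = 2 * n + 3 by omega, show 2 * n + 4 - 2 = 2 * n + 2 by omega, ← this]
  symm
  refine Finset.sum_bij (fun i _ => 2 * i + 3) ?_ ?_ ?_ ?_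
  · intro i hi
    simp only [Finset.mem_range] at hi
    simp only [Finset.mem_filter, Finset.mem_Icc]
    exact ⟨by omega, ⟨i + 1, by ring⟩⟩
  · intro a _ b _ h
    omega
  · intro a ha
    simp only [Finset.mem_filter, Finset.mem_Icc] at ha
    obtain ⟨⟨h1, h2⟩, r, hr⟩ := ha
    exact ⟨r - 1, by simp only [Finset.mem_range]; omega, by omega⟩
  · intro i _
    rw [show 2 * n + 3 - (2 * i + 3) = 2 * n - 2 * i by omega]
end

section
/- Let w ≥ 4 be an even integer. Then Σ_{a+b+c=w, a≥2, b≥1, c≥1} ((−1)^c − (−1)^a)·ζ(a,b,c) = (1/2)·ζ(w) − ζ(2)·ζ(w−2). -/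
open Finset

noncomputable def hH (n : ℕ) : ℝ := ∑ i ∈ range n, 1 / ((i : ℝ) + 1)

lemma hH_succ (n : ℕ) : hH (n+1) = hH n + 1 / ((n : ℝ) + 1) := by
  simp [hH, sum_range_succ]

lemma hH_nonneg (n : ℕ) : 0 ≤ hH n := sum_nonneg fun i _ => by positivity

lemma hH_mono : Monotone hH := monotone_nat_of_le_succ fun n => by
  rw [hH_succ]; have : 0 ≤ 1 / ((n : ℝ) + 1) := by positivity
  linarith

lemma hasSum_tele (b : ℕ) :
    HasSum (fun i : ℕ => 1 / ((i : ℝ) + 1) - 1 / ((i : ℝ) + 1 + b)) (hH b) := by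
  induction b with
  | zero => simpa [hH] using (hasSum_zero : HasSum (fun _ : ℕ => (0:ℝ)) 0)
  | succ b ih =>
    rw [hH_succ]
    have h2 : HasSum (fun i : ℕ => 1 / ((i : ℝ) + 1 + b) - 1 / ((i : ℝ) + 1 + (b + 1 : ℕ)))
        (1 / ((b : ℝ) + 1)) := by
      rw [hasSum_iff_tendsto_nat_of_nonneg]
      · have h3 : ∀ n : ℕ, ∑ i ∈ range n, (1 / ((i : ℝ) + 1 + b) - 1 / ((i : ℝ) + 1 + (b + 1 : ℕ)))
            = 1 / ((b : ℝ) + 1) - 1 / ((n + b : ℕ) + 1 : ℝ) := by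
          intro n
          induction n with
          | zero => simp
          | succ n ihn => 
            rw [sum_range_succ, ihn]; push_cast
            have e1 : (n : ℝ) + 1 + b = n + b + 1 := by ring
            have e2 : (n : ℝ) + 1 + (b + 1) = n + 1 + b + 1 := by ring
            rw [e2, e1]; ring
        simp_rw [h3]
        have := ((tendsto_one_div_add_atTop_nhds_zero_nat (𝕜 := ℝ)).comp
          (Filter.tendsto_add_atTop_nat b)).const_sub (1 / ((b : ℝ) + 1))
        simpa using this
      · intro i
        have : 1 / ((i : ℝ) + 1 + (b + 1 : ℕ)) ≤ 1 / ((i : ℝ) + 1 + b) := by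
          apply one_div_le_one_div_of_le (by positivity); push_cast; linarith
        linarith
    refine (ih.add h2).congr_fun ?_
    intro i; ring

lemma hasSum_tele2 (a b : ℕ) :
    HasSum (fun i : ℕ => 1 / ((i : ℝ) + 1 + a) - 1 / ((i : ℝ) + 1 + b)) (hH b - hH a) := by
  refine ((hasSum_tele b).sub (hasSum_tele a)).congr_fun ?_
  intro i; ring

lemma hasSum_shift {f : ℕ → ℝ} {S : ℝ} (n : ℕ) (h : HasSum (fun i => f (n + 1 + i)) S) :
    HasSum (fun k => if n < k then f k else 0) S := by
  have inj : Function.Injective (fun i : ℕ => n + 1 + i) := fun a b h => by simpa using h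
  rw [← inj.hasSum_iff]
  · refine h.congr_fun ?_
    intro i; simp; intro h; omega
  · intro k hk
    rw [if_neg]
    intro h; exact hk ⟨k - (n+1), by simp; omega⟩

lemma triple (F : ℕ → ℕ → ℕ → ℝ) (hF : ∀ n q r, 0 ≤ F n q r) (g : ℕ → ℕ → ℝ) (h : ℕ → ℝ)
    (h1 : ∀ n q, HasSum (F n q) (g n q)) (h2 : ∀ n, HasSum (g n) (h n)) (h3 : Summable h) :
    HasSum (fun x : ℕ × ℕ × ℕ => F x.1 x.2.1 x.2.2) (∑' n, h n) := by
  have hi : ∀ n, HasSum (fun y : ℕ × ℕ => F n y.1 y.2) (h n) := by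
    intro n
    have hs : Summable (fun y : ℕ × ℕ => F n y.1 y.2) := by
      rw [summable_prod_of_nonneg (fun y => hF _ _ _)]
      refine ⟨fun q => (h1 n q).summable, ?_⟩
      simp_rw [(h1 n _).tsum_eq]; exact (h2 n).summable
    have := hs.hasSum.prod_fiberwise (h1 n)
    rw [(h2 n).unique this]; exact hs.hasSum
  have hs : Summable (fun x : ℕ × ℕ × ℕ => F x.1 x.2.1 x.2.2) := by
    rw [summable_prod_of_nonneg (fun y => hF _ _ _)]
    refine ⟨fun q => (hi q).summable, ?_⟩
    simp_rw [(hi _).tsum_eq]; exact h3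
  have := hs.hasSum.prod_fiberwise hi
  rw [h3.hasSum.unique this]; exact hs.hasSum

-- bound
lemma summable_hH : Summable (fun n : ℕ => hH (2 * n) ^ 2 / (n : ℝ) ^ 2) := by
  have hb : ∀ n : ℕ, hH n ≤ 5 * (n : ℝ) ^ ((1:ℝ)/4) := by
    intro n
    rcases Nat.eq_zero_or_pos n with rfl | hn
    · simp [hH]
    have h1 : hH n ≤ 1 + Real.log n := by
      have := harmonic_le_one_add_log n
      simpa [hH, harmonic] using this
    have h2 := Real.log_le_rpow_div (x := (n:ℝ)) (by positivity) (show (0:ℝ) < 1/4 by norm_num)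
    have h3 : (1:ℝ) ≤ (n : ℝ) ^ ((1:ℝ)/4) := Real.one_le_rpow (by exact_mod_cast hn) (by norm_num)
    linarith
  have hs : Summable (fun n : ℕ => 100 * (1 / (n : ℝ) ^ ((3:ℝ)/2))) :=
    (Real.summable_one_div_nat_rpow.2 (by norm_num)).mul_left _
  refine hs.of_nonneg_of_le (fun n => by positivity) ?_
  intro n
  rcases Nat.eq_zero_or_pos n with rfl | hn
  · simp [hH]
  have hn' : (0:ℝ) < n := by exact_mod_cast hn
  have h1 : hH (2*n) ^ 2 ≤ (5 * ((2 * n : ℕ) : ℝ) ^ ((1:ℝ)/4)) ^ 2 :=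
    pow_le_pow_left₀ (hH_nonneg _) (hb _) 2
  have h2 : ((((2 * n : ℕ) : ℝ)) ^ ((1:ℝ)/4)) ^ 2 = ((2 * n : ℕ) : ℝ) ^ ((1:ℝ)/2) := by
    rw [← Real.rpow_natCast, ← Real.rpow_mul (by positivity)]; norm_num
  have h3 : ((2 * n : ℕ) : ℝ) ^ ((1:ℝ)/2) ≤ 2 * (n : ℝ) ^ ((1:ℝ)/2) := by
    push_cast
    rw [Real.mul_rpow (by norm_num) (by positivity)]
    gcongr
    calc (2:ℝ) ^ ((1:ℝ)/2) ≤ 2 ^ (1:ℝ) := Real.rpow_le_rpow_of_exponent_le (by norm_num) (by norm_num)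
      _ = 2 := by norm_num
  have h4 : (n : ℝ) ^ ((1:ℝ)/2) * (n : ℝ) ^ ((3:ℝ)/2) = (n:ℝ) ^ 2 := by
    rw [← Real.rpow_add hn']; norm_num
  have h5 : hH (2*n) ^ 2 ≤ 50 * (n : ℝ) ^ ((1:ℝ)/2) := by
    rw [mul_pow, h2] at h1; nlinarith
  rw [div_le_iff₀ (by positivity), ← h4]
  have : (n : ℝ) ^ ((3:ℝ)/2) ≠ 0 := by positivity
  field_simp
  have : 0 ≤ (n : ℝ) ^ ((1:ℝ)/2) := by positivity
  linarith

/-- inner geometric sum -/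
lemma geo2 (y z : ℝ) (h : y ≠ z) (s : ℕ) :
    ∑ b ∈ Icc 1 (s + 1), y ^ b * z ^ (s + 2 - b) = y * z * (y ^ (s+1) - z ^ (s+1)) / (y - z) := by
  have h' : y - z ≠ 0 := sub_ne_zero.2 h
  induction s with
  | zero => simp; field_simp
  | succ s ih =>
    rw [sum_Icc_succ_top (by omega)]
    have : ∑ b ∈ Icc 1 (s + 1), y ^ b * z ^ (s + 1 + 2 - b)
        = z * ∑ b ∈ Icc 1 (s + 1), y ^ b * z ^ (s + 2 - b) := by
      rw [mul_sum]; refine sum_congr rfl fun b hb => ?_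
      rw [mem_Icc] at hb
      rw [show s + 1 + 2 - b = (s + 2 - b) + 1 by omega]; ring
    rw [this, ih, show s + 1 + 2 - (s+1+1) = 1 by omega]
    field_simp; ring

lemma geo3 (x y z : ℝ) (h1 : x ≠ y) (h2 : x ≠ z) (h3 : y ≠ z) (n : ℕ) :
    ∑ a ∈ Icc 2 (n + 2), ∑ b ∈ Icc 1 (n + 4 - a - 1), x ^ a * y ^ b * z ^ (n + 4 - a - b)
    = x^2 * y * z * (x ^ (n+2) / ((x-y)*(x-z)) + y ^ (n+2) / ((y-x)*(y-z))
        + z ^ (n+2) / ((z-x)*(z-y))) := by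
  have e1 : x - y ≠ 0 := sub_ne_zero.2 h1
  have e2 : x - z ≠ 0 := sub_ne_zero.2 h2
  have e3 : y - z ≠ 0 := sub_ne_zero.2 h3
  have e1' : y - x ≠ 0 := sub_ne_zero.2 h1.symm
  have e2' : z - x ≠ 0 := sub_ne_zero.2 h2.symm
  have e3' : z - y ≠ 0 := sub_ne_zero.2 h3.symm
  have d1 : y - x = -(x - y) := by ring
  have d2 : z - x = -(x - z) := by ring
  have d3 : z - y = -(y - z) := by ring
  have key : ∀ a ∈ Icc 2 (n+2), ∑ b ∈ Icc 1 (n + 4 - a - 1), x ^ a * y ^ b * z ^ (n + 4 - a - b)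
      = x ^ a * (y * z * (y ^ (n + 3 - a) - z ^ (n+3-a)) / (y - z)) := by
    intro a ha
    rw [mem_Icc] at ha
    obtain ⟨s, hs⟩ : ∃ s, n + 2 = a + s := ⟨n + 2 - a, by omega⟩
    rw [show n + 3 - a = s + 1 by omega, ← geo2 y z h3 s, mul_sum, show n + 4 - a - 1 = s + 1 by omega,
      show n + 4 - a = s + 2 by omega]
    refine sum_congr rfl fun b _ => by ring
  rw [sum_congr rfl key]
  clear key
  induction n with
  | zero => simp; rw [d1, d2, d3]; field_simp; ring
  | succ n ih =>
    -- split by linear recursions separately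
    have aux : ∀ v : ℝ, x - v ≠ 0 → ∀ n : ℕ, ∑ a ∈ Icc 2 (n+2), x ^ a * v ^ (n + 3 - a)
        = x^2 * v * (x ^ (n+1) - v ^ (n+1)) / (x - v) := by
      intro v hv n
      induction n with
      | zero => simp; field_simp
      | succ n ihn =>
        rw [sum_Icc_succ_top (by omega)]
        have : ∑ b ∈ Icc 2 (n + 2), x ^ b * v ^ (n + 1 + 3 - b)
            = v * ∑ b ∈ Icc 2 (n + 2), x ^ b * v ^ (n + 3 - b) := by
          rw [mul_sum]; refine sum_congr rfl fun b hb => ?_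
          rw [mem_Icc] at hb
          rw [show n + 1 + 3 - b = (n + 3 - b) + 1 by omega]; ring
        rw [show n + 1 + 1 + 1 = n + 2 + 1 by ring] at *
        rw [this, ihn, show n + 1 + 3 - (n+2+1) = 1 by omega]
        field_simp; ring
    have : ∑ a ∈ Icc 2 (n+1+2), x ^ a * (y * z * (y ^ (n +1+ 3 - a) - z ^ (n+1+3-a)) / (y - z))
      = y * z / (y - z) * (∑ a ∈ Icc 2 (n+1+2), x ^ a * y ^ (n+1+3-a)
          - ∑ a ∈ Icc 2 (n+1+2), x ^ a * z ^ (n+1+3-a)) := by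
      rw [← sum_sub_distrib, mul_sum]; refine sum_congr rfl fun b _ => by ring
    rw [this, aux y e1, aux z e2, d1, d2, d3]
    field_simp
    ring

lemma pointwise (k l m : ℝ) (hm : 0 < m) (hl : m < l) (hk : l < k) (n : ℕ) (hn : Even n) :
    ∑ a ∈ Icc 2 (n + 2), ∑ b ∈ Icc 1 (n + 4 - a - 1),
      ((-1 : ℝ) ^ (n + 4 - a - b) - (-1 : ℝ) ^ a) * (1 / k ^ a * (1 / l ^ b) * (1 / m ^ (n + 4 - a - b)))
    = 2 * l / ((k^2-l^2)*(m+k)) / k ^ (n+2) + 2*l*m/((k^2-l^2)*(l^2-m^2)) / l^(n+2)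
      - 2*l^3/(k*(k^2-l^2)*(l^2-m^2)) / l^(n+2) - 2*l*m/(k*(k+m)*(l^2-m^2)) / m^(n+2) := by
  have hl0 : 0 < l := by linarith
  have hk0 : 0 < k := by linarith
  have ilm : 1 / l < 1 / m := one_div_lt_one_div_of_lt hm hl
  have ikl : 1 / k < 1 / l := one_div_lt_one_div_of_lt hl0 hk
  have pk : 0 < 1 / k := by positivity
  have pl : 0 < 1 / l := by positivity
  have pm : 0 < 1 / m := by positivity
  have A := geo3 (1/k) (1/l) (-(1/m)) (by linarith) (by linarith) (by linarith) n
  have B := geo3 (-(1/k)) (1/l) (1/m) (by linarith) (by linarith) (by linarith) n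
  have split : ∑ a ∈ Icc 2 (n + 2), ∑ b ∈ Icc 1 (n + 4 - a - 1),
      ((-1 : ℝ) ^ (n + 4 - a - b) - (-1 : ℝ) ^ a) * (1 / k ^ a * (1 / l ^ b) * (1 / m ^ (n + 4 - a - b)))
    = (∑ a ∈ Icc 2 (n + 2), ∑ b ∈ Icc 1 (n + 4 - a - 1), (1/k) ^ a * (1/l) ^ b * (-(1/m)) ^ (n + 4 - a - b))
     - (∑ a ∈ Icc 2 (n + 2), ∑ b ∈ Icc 1 (n + 4 - a - 1), (-(1/k)) ^ a * (1/l) ^ b * (1/m) ^ (n + 4 - a - b)) := by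
    rw [← sum_sub_distrib]
    refine sum_congr rfl fun a _ => ?_
    rw [← sum_sub_distrib]
    refine sum_congr rfl fun b _ => ?_
    rw [neg_pow (1/k), neg_pow (1/m)]
    simp only [one_div, inv_pow]
    ring
  rw [split, A, B]
  have hn2 : Even (n+2) := by simpa [Nat.even_add] using hn
  rw [hn2.neg_pow, hn2.neg_pow]
  simp only [one_div, inv_pow]
  generalize hK : (k ^ (n+2))⁻¹ = K
  generalize hL : (l ^ (n+2))⁻¹ = Lq
  generalize hM : (m ^ (n+2))⁻¹ = M
  simp only [div_eq_mul_inv _ (k ^ (n+2)), div_eq_mul_inv _ (l ^ (n+2)), div_eq_mul_inv _ (m ^ (n+2)), hK, hL, hM]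
  have q1 : k - l ≠ 0 := by linarith
  have q2 : l - m ≠ 0 := by linarith
  have q4 : k + l ≠ 0 := by linarith
  have q5 : l + m ≠ 0 := by linarith
  have q6 : k + m ≠ 0 := by linarith
  have r1 : k⁻¹ - l⁻¹ = -((k-l)/(k*l)) := by field_simp; ring
  have r2 : k⁻¹ - -m⁻¹ = (k+m)/(k*m) := by field_simp; ring
  have r3 : l⁻¹ - k⁻¹ = ((k-l)/(k*l)) := by field_simp
  have r4 : l⁻¹ - -m⁻¹ = (l+m)/(l*m) := by field_simp; ring
  have r5 : -m⁻¹ - k⁻¹ = -((k+m)/(k*m)) := by field_simp; ring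
  have r6 : -m⁻¹ - l⁻¹ = -((l+m)/(l*m)) := by field_simp; ring
  have r7 : -k⁻¹ - l⁻¹ = -((k+l)/(k*l)) := by field_simp; ring
  have r8 : -k⁻¹ - m⁻¹ = -((k+m)/(k*m)) := by field_simp; ring
  have r9 : l⁻¹ - -k⁻¹ = ((k+l)/(k*l)) := by field_simp; ring
  have r10 : l⁻¹ - m⁻¹ = -((l-m)/(l*m)) := by field_simp; ring
  have r11 : m⁻¹ - -k⁻¹ = ((k+m)/(k*m)) := by field_simp; ring
  have r12 : m⁻¹ - l⁻¹ = ((l-m)/(l*m)) := by field_simp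
  have r13 : k^2-l^2 = (k-l)*(k+l) := by ring
  have r14 : l^2-m^2 = (l-m)*(l+m) := by ring
  rw [r1,r2,r3,r4,r5,r6,r7,r8,r9,r10,r11,r12,r13,r14, add_comm m k]
  field_simp
  ring

noncomputable def hH2 (n : ℕ) : ℝ := ∑ i ∈ range n, 1 / ((i : ℝ) + 1) ^ 2

lemma hH2_succ (n : ℕ) : hH2 (n+1) = hH2 n + 1 / ((n : ℝ) + 1) ^ 2 := by
  simp [hH2, sum_range_succ]

lemma sum_rev (A : ℝ) (N : ℕ) (B : ℕ) (hA : A = B + N) :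
    ∑ i ∈ range N, 1 / (A - i) = hH (B + N) - hH B := by
  subst hA
  induction N with
  | zero => simp
  | succ N ih =>
    rw [sum_range_succ', ← add_assoc, hH_succ]
    have : ∑ i ∈ range N, 1 / ((B : ℝ) + (N + 1 : ℕ) - (i + 1 : ℕ)) = hH (B + N) - hH B := by
      rw [← ih]; refine sum_congr rfl fun i _ => ?_
      push_cast; congr 1; ring
    rw [this]; push_cast
    rw [show (B : ℝ) + (N + 1) - 0 = B + N + 1 by ring]; ring

lemma sum_fwd (B N : ℕ) :
    ∑ i ∈ range N, 1 / ((B : ℝ) + i + 1) = hH (B + N) - hH B := by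
  induction N with
  | zero => simp
  | succ N ih => rw [sum_range_succ, ih, ← add_assoc, hH_succ]; push_cast; ring

lemma sum_prod (M : ℝ) (N B : ℕ) (hM : M = B + N + 1) :
    ∑ i ∈ range N, 1 / (((i:ℝ) + 1) * (M - 1 - i)) = (hH N + hH (B + N) - hH B) / M := by
  rw [add_sub_assoc, ← sum_rev (M-1) N B (by rw [hM]; ring), hH, ← sum_add_distrib, sum_div]
  refine sum_congr rfl fun i hi => ?_
  have hi' : (i : ℝ) + 1 ≤ N := by exact_mod_cast mem_range.1 hi
  have h0 : (0:ℝ) ≤ i := by positivity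
  have hB : (0:ℝ) ≤ B := by positivity
  have h1 : M - 1 - i ≠ 0 := by rw [hM]; linarith
  have h2 : M ≠ 0 := by rw [hM]; positivity
  have h3 : (i:ℝ) + 1 ≠ 0 := by positivity
  field_simp
  ring

lemma D_formula (N : ℕ) :
    2 * ∑ i ∈ range N, hH (2 * N + 1 - i) / ((i : ℝ) + 1)
     = hH (2 * N + 2) ^ 2 - hH2 (2 * N + 2) - 1 / ((N : ℝ) + 1) ^ 2 + hH N ^ 2 := by
  induction N with
  | zero => norm_num [hH, hH2, sum_range_succ]
  | succ N ih =>
    rw [sum_range_succ]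
    have e : ∑ i ∈ range N, hH (2 * (N+1) + 1 - i) / ((i : ℝ) + 1)
      = ∑ i ∈ range N, hH (2 * N + 1 - i) / ((i : ℝ) + 1)
       + ∑ i ∈ range N, 1 / (((i:ℝ) + 1) * ((2 * N + 3 : ℝ) - 1 - i))
       + ∑ i ∈ range N, 1 / (((i:ℝ) + 1) * ((2 * N + 4 : ℝ) - 1 - i)) := by
      rw [← sum_add_distrib, ← sum_add_distrib]
      refine sum_congr rfl fun i hi => ?_
      have hi1 := mem_range.1 hi
      have hi' : (i : ℝ) + 1 ≤ N := by exact_mod_cast mem_range.1 hi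
      have h0 : (0:ℝ) ≤ i := by positivity
      obtain ⟨s, hs⟩ : ∃ s, 2 * N + 1 = s + i := ⟨2 * N + 1 - i, by omega⟩
      have hs' : (s : ℝ) = 2 * N + 1 - i := by
        have : ((2 * N + 1 : ℕ) : ℝ) = (s + i : ℕ) := by rw [hs]
        push_cast at this; linarith
      rw [show 2 * (N+1) + 1 - i = s + 1 + 1 by omega, show 2 * N + 1 - i = s by omega,
        hH_succ, hH_succ]
      push_cast
      rw [hs']
      have h1 : (2 * N + 3 : ℝ) - 1 - i ≠ 0 := by linarith
      have h2 : (2 * N + 4 : ℝ) - 1 - i ≠ 0 := by linarith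
      have h1' : (2 * N + 1 - i + 1 : ℝ)  = (2 * N + 3 : ℝ) - 1 - i := by ring
      have h2' : (2 * N + 1 - i + 1 + 1: ℝ)  = (2 * N + 4 : ℝ) - 1 - i := by ring
      have h3 : (i:ℝ) + 1 ≠ 0 := by positivity
      rw [h2', h1']
      field_simp
    rw [e, sum_prod _ N (N+2) (by push_cast; ring), sum_prod _ N (N+3) (by push_cast; ring),
      mul_add, mul_add, mul_add, ih]
    rw [show 2 * (N+1) + 1 - N = N + 3 by omega, show 2 * (N+1) + 2 = 2 * N + 2 + 1 + 1 by ring,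
      show N + 2 + N = 2 * N + 2 by ring, show N + 3 + N = 2 * N + 2 + 1 by ring]
    simp only [hH_succ, hH2_succ]
    push_cast
    generalize hH N = x
    generalize hH (2 * N) = y
    generalize hH2 (2 * N) = z
    have h0 : (0:ℝ) ≤ N := by positivity
    generalize (N : ℝ) = t at *
    have : t + 1 ≠ 0 := by positivity
    have : t + 2 + 1 ≠ 0 := by positivity
    have : t + 1 + 1 ≠ 0 := by positivity
    have : 2 * t + 3 ≠ 0 := by positivity
    have : 2 * t + 1 ≠ 0 := by positivity
    have : t + 2 ≠ 0 := by positivity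
    rw [show 2 * t + 3 + 1 = 2 * (t + 2) by ring, show 2 * t + 2 + 1 = 2 * t + 3 by ring,
      show 2 * t + 1 + 1 = 2 * (t + 1) by ring, show 2 * t + 4 = 2 * (t + 2) by ring,
      show t + 1 + 1 = t + 2 by ring, show t + 2 + 1 = t + 3 by ring] at *
    field_simp
    ring

lemma sum_HdivI (B N : ℕ) :
    2 * ∑ j ∈ range N, hH (B + j + 1) / ((B : ℝ) + j + 1)
      = hH (B + N) ^ 2 + hH2 (B + N) - hH B ^ 2 - hH2 B := by
  induction N with
  | zero => simp
  | succ N ih =>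
    rw [sum_range_succ, mul_add, ih, ← add_assoc, hH_succ, hH2_succ]
    push_cast
    have : (B : ℝ) + N + 1 ≠ 0 := by positivity
    field_simp
    ring

lemma sum_sq (B N : ℕ) :
    ∑ j ∈ range N, 1 / ((B : ℝ) + j + 1) ^ 2 = hH2 (B + N) - hH2 B := by
  induction N with
  | zero => simp
  | succ N ih =>
    rw [sum_range_succ, ih, ← add_assoc, hH2_succ]
    push_cast
    ring

lemma finite_identity (N : ℕ) (n : ℝ) (hn : n = N + 1) :
    - (∑ i ∈ range N, 2 * ((i:ℝ) + 1) / (n ^ 2 - ((i:ℝ) + 1) ^ 2) * (hH (i + (N + 1)) - hH (N + 1)))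
    - (∑ i ∈ range N, 2 * ((i:ℝ) + 1) / (n ^ 2 - ((i:ℝ) + 1) ^ 2)) * (hH (2 * (N + 1)) / 2)
    + (∑ i ∈ range N, 2 * n / (n ^ 2 - ((i:ℝ) + 1) ^ 2)) * (hH (N + 1) - hH (2 * (N + 1)) / 2)
    + (- hH2 (2 * (N + 1))
       + ∑ i ∈ range N, (hH (2 * (N + 1)) - hH (N + 1 + i + 1)) / ((N : ℝ) - i)
       + ∑ j ∈ range (N + 1), hH (N + 1 + j + 1) / (n + j + 1)) = - (1 / (2 * n ^ 2)) := by
  have hn0 : n ≠ 0 := by rw [hn]; positivity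
  have side : ∀ i ∈ range N, (N : ℝ) - i ≠ 0 ∧ n + i + 1 ≠ 0 ∧
      n ^ 2 - ((i:ℝ) + 1) ^ 2 = ((N : ℝ) - i) * (n + i + 1) := by
    intro i hi
    have hi' : (i : ℝ) + 1 ≤ N := by exact_mod_cast mem_range.1 hi
    have h0 : (0:ℝ) ≤ i := by positivity
    refine ⟨by linarith, by rw [hn]; positivity, by rw [hn]; ring⟩
  -- basic sums
  have sA : ∑ i ∈ range N, 1 / ((N : ℝ) - i) = hH N := by
    have := sum_rev N N 0 (by simp)
    simpa [hH] using this
  have sB : ∑ i ∈ range N, 1 / (n + i + 1) = hH (N + 1 + N) - hH (N + 1) := by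
    rw [← sum_fwd, hn]; push_cast; rfl
  have sC : ∑ i ∈ range N, hH (N + 1 + i + 1) / ((N : ℝ) - i)
      = ∑ i ∈ range N, hH (2 * N + 1 - i) / ((i : ℝ) + 1) := by
    rw [← sum_range_reflect]
    refine sum_congr rfl fun i hi => ?_
    have hi1 := mem_range.1 hi
    rw [show N + 1 + (N - 1 - i) + 1 = 2 * N + 1 - i by omega, show N - 1 - i = N - (i + 1) by omega,
      Nat.cast_sub (by omega)]
    push_cast
    congr 1; ring
  have sD := D_formula N
  have sE := sum_HdivI (N+1) N
  have sE' := sum_HdivI (N+1) (N+1)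
  have sF := sum_sq (N+1) N
  have sG : ∑ i ∈ range N, 1 / (((N : ℝ) - i) * (n + i + 1))
      = (hH N + (hH (N + 1 + N) - hH (N + 1))) / (2 * n) := by
    rw [← sA, ← sB, ← sum_add_distrib, sum_div]
    refine sum_congr rfl fun i hi => ?_
    obtain ⟨h1, h2, -⟩ := side i hi
    field_simp
    rw [hn]; ring
  have t1 : ∑ i ∈ range N, 2 * ((i:ℝ) + 1) / (n ^ 2 - ((i:ℝ) + 1) ^ 2) * (hH (i + (N + 1)) - hH (N + 1))
     = ∑ i ∈ range N, hH (N + 1 + i + 1) / ((N : ℝ) - i)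
       - ∑ i ∈ range N, hH (N + 1 + i + 1) / (n + i + 1)
       - ∑ i ∈ range N, 1 / (((N : ℝ) - i) * (n + i + 1))
       + ∑ i ∈ range N, 1 / (n + i + 1) ^ 2
       - hH (N+1) * (∑ i ∈ range N, 1 / ((N : ℝ) - i) - ∑ i ∈ range N, 1 / (n + i + 1)) := by
    simp only [mul_sub, mul_sum, ← sum_sub_distrib, ← sum_add_distrib]
    refine sum_congr rfl fun i hi => ?_
    obtain ⟨h1, h2, h3⟩ := side i hi
    rw [h3, hH_succ (N + 1 + i), add_comm i (N+1)]
    push_cast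
    rw [← hn]
    field_simp
    rw [hn]; ring
  have t2 : ∑ i ∈ range N, 2 * ((i:ℝ) + 1) / (n ^ 2 - ((i:ℝ) + 1) ^ 2)
     = ∑ i ∈ range N, 1 / ((N : ℝ) - i) - ∑ i ∈ range N, 1 / (n + i + 1) := by
    simp only [← sum_sub_distrib]
    refine sum_congr rfl fun i hi => ?_
    obtain ⟨h1, h2, h3⟩ := side i hi
    rw [h3]
    field_simp
    rw [hn]; ring
  have t3 : ∑ i ∈ range N, 2 * n / (n ^ 2 - ((i:ℝ) + 1) ^ 2)
     = ∑ i ∈ range N, 1 / ((N : ℝ) - i) + ∑ i ∈ range N, 1 / (n + i + 1) := by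
    simp only [← sum_add_distrib]
    refine sum_congr rfl fun i hi => ?_
    obtain ⟨h1, h2, h3⟩ := side i hi
    rw [h3]
    field_simp
    rw [hn]; ring
  have t4 : ∑ i ∈ range N, (hH (2 * (N + 1)) - hH (N + 1 + i + 1)) / ((N : ℝ) - i)
     = hH (2 * (N + 1)) * ∑ i ∈ range N, 1 / ((N : ℝ) - i)
        - ∑ i ∈ range N, hH (N + 1 + i + 1) / ((N : ℝ) - i) := by
    rw [mul_sum, ← sum_sub_distrib]
    refine sum_congr rfl fun i hi => ?_
    ring
  push_cast at sE sE' sF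
  rw [← hn] at sE sE' sF
  rw [t1, t2, t3, t4, sF, sG, sA, sB, sC]
  have sD2 : ∑ i ∈ range N, hH (2 * N + 1 - i) / ((i : ℝ) + 1)
     = (hH (2 * N + 2) ^ 2 - hH2 (2 * N + 2) - 1 / ((N : ℝ) + 1) ^ 2 + hH N ^ 2) / 2 := by
    rw [← sD]; ring
  have sE2 : ∑ j ∈ range N, hH (N + 1 + j + 1) / (n + j + 1) = 
     (hH (N + 1 + N) ^ 2 + hH2 (N + 1 + N) - hH (N+1) ^ 2 - hH2 (N+1)) / 2 := by
    rw [← sE]; ring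
  have sE2' : ∑ j ∈ range (N+1), hH (N + 1 + j + 1) / (n + j + 1) = 
     (hH (N + 1 + (N+1)) ^ 2 + hH2 (N + 1 + (N+1)) - hH (N+1) ^ 2 - hH2 (N+1)) / 2 := by
    rw [← sE']; ring
  rw [sD2, sE2, sE2']
  rw [show N + 1 + (N+1) = 2 * N + 1 + 1 by ring, show N + 1 + N = 2 * N + 1 by ring,
    show 2 * (N+1) = 2 * N + 1 + 1 by ring]
  simp only [hH_succ, hH2_succ]
  push_cast
  rw [hn]
  generalize hH N = x
  generalize hH (2 * N) = y
  generalize hH2 (2 * N) = z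
  generalize hH2 N = z'
  have h0 : (0:ℝ) ≤ N := by positivity
  generalize (N : ℝ) = t at *
  have : t + 1 ≠ 0 := by positivity
  have : 2 * t + 1 ≠ 0 := by positivity
  rw [show 2 * t + 1 + 1 = 2 * (t + 1) by ring]
  field_simp
  ring

lemma hasSum_V1 (n : ℕ) :
    HasSum (fun r : ℕ => if n < r then (n:ℝ) / ((r:ℝ)^2 - (n:ℝ)^2) else 0) (hH (2 * n) / 2) := by
  apply hasSum_shift (f := fun r : ℕ => (n:ℝ) / ((r:ℝ)^2 - (n:ℝ)^2))
  refine ((hasSum_tele (2 * n)).div_const 2).congr_fun fun i => ?_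
  push_cast
  rw [show ((n:ℝ) + 1 + i)^2 - (n:ℝ)^2 = (i + 1) * (i + 1 + 2 * n) by ring]
  have h1 : (i:ℝ) + 1 ≠ 0 := by positivity
  have h2 : (i:ℝ) + 1 + 2 * n ≠ 0 := by positivity
  field_simp
  ring

lemma hasSum_V2 (n : ℕ) :
    HasSum (fun r : ℕ => if n < r then (n:ℝ)^2 / (r * ((r:ℝ)^2 - (n:ℝ)^2)) else 0)
      (hH n - hH (2 * n) / 2) := by
  apply hasSum_shift (f := fun r : ℕ => (n:ℝ)^2 / (r * ((r:ℝ)^2 - (n:ℝ)^2)))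
  refine ((hasSum_tele n).sub ((hasSum_tele (2 * n)).div_const 2)).congr_fun fun i => ?_
  push_cast
  rw [show ((n:ℝ) + 1 + i)^2 - (n:ℝ)^2 = (i + 1) * (i + 1 + 2 * n) by ring,
    show (n:ℝ) + 1 + i = i + 1 + n by ring]
  have h1 : (i:ℝ) + 1 ≠ 0 := by positivity
  have h2 : (i:ℝ) + 1 + 2 * n ≠ 0 := by positivity
  have h3 : (i:ℝ) + 1 + n ≠ 0 := by positivity
  field_simp
  ring

lemma hasSum_V3 (n q : ℕ) :
    HasSum (fun r : ℕ => if q < r then (n:ℝ) / (r * ((r:ℝ) + n)) else 0)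
      (hH (q + n) - hH q) := by
  apply hasSum_shift (f := fun r : ℕ => (n:ℝ) / (r * ((r:ℝ) + n)))
  refine (hasSum_tele2 q (q + n)).congr_fun fun i => ?_
  push_cast
  rw [show (q:ℝ) + 1 + i = i + 1 + q by ring]
  have h1 : (i:ℝ) + 1 + q ≠ 0 := by positivity
  have h2 : (i:ℝ) + 1 + q + n ≠ 0 := by positivity
  have h3 : (i:ℝ) + 1 + (q + n) ≠ 0 := by positivity
  field_simp
  ring

noncomputable def Z2 : ℝ := ∑' i : ℕ, 1 / ((i:ℝ) + 1) ^ 2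

lemma summable_Z2 : Summable (fun i : ℕ => 1 / ((i:ℝ) + 1) ^ 2) := by
  have := (summable_nat_add_iff 1).2 (Real.summable_one_div_nat_pow.2 (one_lt_two))
  simpa using this

noncomputable def R3 (n : ℕ) : ℝ :=
  Z2 - hH2 (2 * n) + ∑ i ∈ range (n - 1), (hH (2 * n) - hH (n + i + 1)) / (((n - 1 : ℕ) : ℝ) - i)
    + ∑ j ∈ range n, hH (n + j + 1) / ((n : ℝ) + j + 1)

lemma hasSum_V4 (n : ℕ) (hn : 0 < n) :
    HasSum (fun q : ℕ => if n < q then 2 * (q:ℝ) / ((q:ℝ)^2 - (n:ℝ)^2) * (hH (q + n) - hH q) else 0)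
      (R3 n) := by
  obtain ⟨N, rfl⟩ : ∃ N, n = N + 1 := ⟨n - 1, by omega⟩
  apply hasSum_shift (f := fun q : ℕ => 2 * (q:ℝ) / ((q:ℝ)^2 - ((N+1:ℕ):ℝ)^2) * (hH (q + (N+1)) - hH q))
  have a1 : HasSum (fun i : ℕ => 1 / ((i:ℝ) + 1 + 2 * (N + 1)) ^ 2) (Z2 - hH2 (2 * (N + 1))) := by
    have := (hasSum_nat_add_iff' (2 * (N+1))).2 summable_Z2.hasSum
    refine this.congr_fun fun i => ?_
    push_cast; congr 2; ring
  have a2 : HasSum (fun i : ℕ => ∑ j ∈ range N,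
      (1 / ((i:ℝ) + 1 + (N + 1 + j + 1 : ℕ)) - 1 / ((i:ℝ) + 1 + (2 * (N + 1) : ℕ))) / ((N:ℝ) - j))
      (∑ i ∈ range N, (hH (2 * (N+1)) - hH (N + 1 + i + 1)) / ((N : ℝ) - i)) :=
    hasSum_sum fun j _ => (hasSum_tele2 _ _).div_const _
  have a3 : HasSum (fun i : ℕ => ∑ j ∈ range (N+1),
      (1 / ((i:ℝ) + 1) - 1 / ((i:ℝ) + 1 + (N + 1 + j + 1 : ℕ))) / (((N + 1 : ℕ) : ℝ) + j + 1))
      (∑ j ∈ range (N+1), hH (N + 1 + j + 1) / (((N+1:ℕ) : ℝ) + j + 1)) :=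
    hasSum_sum fun j _ => (hasSum_tele _).div_const _
  refine ((a1.add a2).add a3).congr_fun fun i => ?_
  have e : hH (N + 1 + 1 + i + (N + 1)) - hH (N + 1 + 1 + i)
      = ∑ j ∈ range (N+1), 1 / ((i:ℝ) + 1 + (N + 1 + j + 1)) := by
    rw [← sum_fwd]; refine sum_congr rfl fun j _ => ?_
    push_cast; congr 1; ring
  rw [e]
  have h1 : (i:ℝ) + 1 ≠ 0 := by positivity
  have h2 : (i:ℝ) + 1 + 2 * (N + 1) ≠ 0 := by positivity
  have e2 : 2 * ((N + 1 + 1 + i : ℕ) : ℝ) / (((N + 1 + 1 + i : ℕ) : ℝ)^2 - ((N+1:ℕ):ℝ)^2)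
      = 1 / ((i:ℝ) + 1 + 2 * (N + 1)) + 1 / ((i:ℝ) + 1) := by
    push_cast
    rw [show ((N:ℝ) + 1 + 1 + i)^2 - ((N:ℝ) + 1)^2 = (i + 1) * (i + 1 + 2 * (N + 1)) by ring]
    field_simp
    ring
  rw [e2, add_mul]
  congr 1
  · rw [sum_range_succ, mul_add, add_comm, mul_sum]
    congr 1
    · rw [show (i:ℝ) + 1 + (N + 1 + N + 1) = i + 1 + 2 * (N + 1) by ring]
      field_simp
    · refine sum_congr rfl fun j hj => ?_
      have hj' : (j : ℝ) + 1 ≤ N := by exact_mod_cast mem_range.1 hj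
      have h3 : (N:ℝ) - j ≠ 0 := by linarith
      have h4 : (i:ℝ) + 1 + (N + 1 + j + 1) ≠ 0 := by positivity
      push_cast
      field_simp
      ring
  · rw [mul_sum]
    refine sum_congr rfl fun j hj => ?_
    have h4 : (i:ℝ) + 1 + (N + 1 + j + 1) ≠ 0 := by positivity
    have h5 : (N:ℝ) + 1 + j + 1 ≠ 0 := by positivity
    push_cast
    field_simp
    ring

lemma sum_cond (N : ℕ) (f : ℕ → ℝ) :
    ∑ q ∈ range (N+1), (if 0 < q ∧ q < N + 1 then f q else 0) = ∑ i ∈ range N, f (i+1) := by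
  rw [sum_range_succ']
  simp only [lt_irrefl, false_and, if_false, add_zero]
  refine sum_congr rfl fun i hi => ?_
  rw [if_pos ⟨by omega, by have := mem_range.1 hi; omega⟩]

lemma hasSum_cond (n : ℕ) (f : ℕ → ℝ) :
    HasSum (fun q => if 0 < q ∧ q < n then f q else 0)
      (∑ q ∈ range n, (if 0 < q ∧ q < n then f q else 0)) := by
  apply hasSum_sum_of_ne_finset_zero
  intro q hq
  rw [if_neg]
  rintro ⟨_, h⟩
  exact hq (mem_range.2 h)

lemma summable_cond (f : ℕ → ℕ → ℝ) (C : ℝ)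
    (hf : ∀ n q : ℕ, 0 < q → q < n → |f n q| ≤ C * (1 / ((n:ℝ) - q) + 1 / q) * hH (2 * n) / (n:ℝ)^2) :
    Summable (fun n => ∑ q ∈ range n, (if 0 < q ∧ q < n then f n q else 0)) := by
  refine Summable.of_norm_bounded (g := fun n : ℕ => 2 * |C| * (hH (2 * n) ^ 2 / (n:ℝ)^2))
    (summable_hH.mul_left _) fun n => ?_
  rcases Nat.eq_zero_or_pos n with rfl | hn
  · simp
  obtain ⟨N, rfl⟩ : ∃ N, n = N + 1 := ⟨n - 1, by omega⟩
  rw [sum_cond, Real.norm_eq_abs]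
  have sA : ∑ i ∈ range N, 1 / ((N : ℝ) - i) = hH N := by
    have := sum_rev N N 0 (by simp)
    simpa [hH] using this
  have hNm : hH N ≤ hH (2 * (N+1)) := hH_mono (by omega)
  have hP : 0 ≤ hH (2 * (N+1)) / ((N+1:ℕ):ℝ)^2 := div_nonneg (hH_nonneg _) (by positivity)
  calc |∑ i ∈ range N, f (N+1) (i+1)| ≤ ∑ i ∈ range N, |f (N+1) (i+1)| := abs_sum_le_sum_abs _ _
    _ ≤ ∑ i ∈ range N, |C| * (1 / ((N : ℝ) - i) + 1 / ((i:ℝ) + 1)) * (hH (2 * (N+1)) / ((N+1:ℕ):ℝ)^2) := by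
        refine sum_le_sum fun i hi => ?_
        have hi' : (i : ℝ) + 1 ≤ N := by exact_mod_cast mem_range.1 hi
        have := hf (N+1) (i+1) (by omega) (by have := mem_range.1 hi; omega)
        rw [mul_div_assoc] at this
        refine this.trans ?_
        have e : ((N+1:ℕ):ℝ) - ((i+1:ℕ):ℝ) = N - i := by push_cast; ring
        rw [e]
        push_cast at hP ⊢
        have hb : 0 ≤ 1 / ((N : ℝ) - i) + 1 / ((i:ℝ) + 1) := by
          have : 0 < (N:ℝ) - i := by linarith
          positivity
        refine mul_le_mul_of_nonneg_right ?_ hP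
        exact mul_le_mul_of_nonneg_right (le_abs_self C) hb
    _ = |C| * (hH N + hH N) * (hH (2 * (N+1)) / ((N+1:ℕ):ℝ)^2) := by
        rw [← sum_mul, ← mul_sum, sum_add_distrib, sA]; rfl
    _ ≤ |C| * (hH (2 * (N+1)) + hH (2 * (N+1))) * (hH (2 * (N+1)) / ((N+1:ℕ):ℝ)^2) := by
        gcongr
    _ = _ := by ring

lemma inner_finite (n q : ℕ) :
    HasSum (fun r : ℕ => if 0 < r ∧ r < q then 1 / ((r:ℝ) + n) else 0) (hH (q - 1 + n) - hH n) := by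
  have := hasSum_cond q (fun r => 1 / ((r:ℝ) + n))
  rcases Nat.eq_zero_or_pos q with rfl | hn
  · simpa using this
  obtain ⟨N, rfl⟩ : ∃ N, q = N + 1 := ⟨q - 1, by omega⟩
  rw [sum_cond] at this
  convert this using 1
  rw [add_tsub_cancel_right, add_comm N n, ← sum_fwd]
  refine sum_congr rfl fun j _ => ?_
  push_cast; congr 1; ring

lemma pow_bound (n p : ℕ) (hp : 2 ≤ p) (hn : 0 < n) : 1 / (n:ℝ)^p ≤ 1 / (n:ℝ)^2 := by
  have : (1:ℝ) ≤ n := by exact_mod_cast hn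
  exact one_div_le_one_div_of_le (by positivity) (pow_le_pow_right₀ this hp)

/-- the four pieces -/
noncomputable def G0 (n q r : ℕ) : ℝ :=
  if 0 < r ∧ r < q ∧ q < n then 1 / ((n:ℝ)^2) * (1 / q) * (1 / r) else 0
noncomputable def G1 (p n q r : ℕ) : ℝ :=
  if 0 < r ∧ r < q ∧ q < n then 2 * q / (((n:ℝ)^2 - (q:ℝ)^2) * (r + n)) / (n:ℝ)^p else 0
noncomputable def G2 (p n q r : ℕ) : ℝ :=
  if 0 < q ∧ q < n ∧ n < r then 2 * n * q / (((r:ℝ)^2 - (n:ℝ)^2) * ((n:ℝ)^2 - (q:ℝ)^2)) / (n:ℝ)^p else 0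
noncomputable def G3 (p n q r : ℕ) : ℝ :=
  if 0 < q ∧ q < n ∧ n < r then
    2 * (n:ℝ)^3 / (r * ((r:ℝ)^2 - (n:ℝ)^2) * ((n:ℝ)^2 - (q:ℝ)^2)) / (n:ℝ)^p else 0
noncomputable def G4 (p n q r : ℕ) : ℝ :=
  if 0 < n ∧ n < q ∧ q < r then
    2 * q * n / (r * ((r:ℝ) + n) * ((q:ℝ)^2 - (n:ℝ)^2)) / (n:ℝ)^p else 0

lemma sq_sub_pos {a b : ℕ} (h : a < b) : 0 < (b:ℝ)^2 - (a:ℝ)^2 := by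
  have h1 : (a:ℝ) < b := by exact_mod_cast h
  have h2 : (0:ℝ) ≤ a := by positivity
  nlinarith

lemma G0_nonneg (n q r : ℕ) : 0 ≤ G0 n q r := by
  unfold G0; split_ifs <;> positivity
lemma G1_nonneg (p n q r : ℕ) : 0 ≤ G1 p n q r := by
  unfold G1; split_ifs with h
  · have := sq_sub_pos h.2.2; positivity
  · rfl
lemma G2_nonneg (p n q r : ℕ) : 0 ≤ G2 p n q r := by
  unfold G2; split_ifs with h
  · have := sq_sub_pos h.2.2; have := sq_sub_pos h.2.1; positivity
  · rfl
lemma G3_nonneg (p n q r : ℕ) : 0 ≤ G3 p n q r := by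
  unfold G3; split_ifs with h
  · have := sq_sub_pos h.2.2; have := sq_sub_pos h.2.1; positivity
  · rfl
lemma G4_nonneg (p n q r : ℕ) : 0 ≤ G4 p n q r := by
  unfold G4; split_ifs with h
  · have := sq_sub_pos h.2.1; positivity
  · rfl

noncomputable def g1 (p n q : ℕ) : ℝ :=
  2 * q / ((n:ℝ)^2 - (q:ℝ)^2) / (n:ℝ)^p * (hH (q - 1 + n) - hH n)
noncomputable def g2 (p n q : ℕ) : ℝ :=
  2 * q / ((n:ℝ)^2 - (q:ℝ)^2) / (n:ℝ)^p * (hH (2 * n) / 2)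
noncomputable def g3 (p n q : ℕ) : ℝ :=
  2 * n / ((n:ℝ)^2 - (q:ℝ)^2) / (n:ℝ)^p * (hH n - hH (2 * n) / 2)
noncomputable def g4 (p n q : ℕ) : ℝ :=
  if 0 < n then 1 / (n:ℝ)^p * 
    (if n < q then 2 * (q:ℝ) / ((q:ℝ)^2 - (n:ℝ)^2) * (hH (q + n) - hH q) else 0) else 0

noncomputable def hs (g : ℕ → ℕ → ℝ) (n : ℕ) : ℝ :=
  ∑ q ∈ range n, (if 0 < q ∧ q < n then g n q else 0)
noncomputable def h4 (p n : ℕ) : ℝ := if 0 < n then 1 / (n:ℝ)^p * R3 n else 0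

lemma G0_inner (n q : ℕ) : HasSum (G0 n q)
    (if 0 < q ∧ q < n then 1 / (n:ℝ)^2 * (1 / q) * hH (q - 1) else 0) := by
  split_ifs with h
  · have := (inner_finite 0 q).mul_left (1 / (n:ℝ)^2 * (1 / q))
    simp only [Nat.cast_zero, add_zero, hH, range_zero, sum_empty, sub_zero] at this
    refine this.congr_fun fun r => ?_
    simp [G0, h.2]
  · refine hasSum_zero.congr_fun fun r => ?_
    unfold G0; rw [if_neg]; rintro ⟨a, b, c⟩; exact h ⟨by omega, c⟩

lemma G1_inner (p n q : ℕ) : HasSum (G1 p n q) (if 0 < q ∧ q < n then g1 p n q else 0) := by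
  split_ifs with h
  · have := (inner_finite n q).mul_left (2 * q / ((n:ℝ)^2 - (q:ℝ)^2) / (n:ℝ)^p)
    refine this.congr_fun fun r => ?_
    simp only [G1, h.2, and_true]
    split_ifs with h'
    · rw [← div_div]; ring
    · ring
  · refine hasSum_zero.congr_fun fun r => ?_
    unfold G1; rw [if_neg]; rintro ⟨a, b, c⟩; exact h ⟨by omega, c⟩

lemma G2_inner (p n q : ℕ) : HasSum (G2 p n q) (if 0 < q ∧ q < n then g2 p n q else 0) := by
  split_ifs with h
  · have := (hasSum_V1 n).mul_left (2 * q / ((n:ℝ)^2 - (q:ℝ)^2) / (n:ℝ)^p)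
    refine this.congr_fun fun r => ?_
    simp only [G2, h.1, h.2, true_and]
    split_ifs with h'
    · have := sq_sub_pos h'; have := sq_sub_pos h.2
      field_simp
    · ring
  · refine hasSum_zero.congr_fun fun r => ?_
    unfold G2; rw [if_neg]; rintro ⟨a, b, c⟩; exact h ⟨by omega, b⟩

lemma G3_inner (p n q : ℕ) : HasSum (G3 p n q) (if 0 < q ∧ q < n then g3 p n q else 0) := by
  split_ifs with h
  · have := (hasSum_V2 n).mul_left (2 * n / ((n:ℝ)^2 - (q:ℝ)^2) / (n:ℝ)^p)
    refine this.congr_fun fun r => ?_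
    simp only [G3, h.1, h.2, true_and]
    split_ifs with h'
    · have := sq_sub_pos h'; have := sq_sub_pos h.2
      have : (0:ℝ) < r := by exact_mod_cast (by omega : 0 < r)
      field_simp
    · ring
  · refine hasSum_zero.congr_fun fun r => ?_
    unfold G3; rw [if_neg]; rintro ⟨a, b, c⟩; exact h ⟨by omega, b⟩

lemma G4_inner (p n q : ℕ) : HasSum (G4 p n q) (g4 p n q) := by
  unfold g4
  by_cases h : 0 < n ∧ n < q
  · rw [if_pos h.1, if_pos h.2, ← mul_assoc]
    have := (hasSum_V3 n q).mul_left (1 / (n:ℝ)^p * (2 * (q:ℝ) / ((q:ℝ)^2 - (n:ℝ)^2)))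
    refine this.congr_fun fun r => ?_
    simp only [G4, h.1, h.2, true_and]
    split_ifs with h'
    · have := sq_sub_pos h.2
      have : (0:ℝ) < r := by exact_mod_cast (by omega : 0 < r)
      field_simp
    · ring
  · have : (if 0 < n then 1 / (n:ℝ)^p * 
      (if n < q then 2 * (q:ℝ) / ((q:ℝ)^2 - (n:ℝ)^2) * (hH (q + n) - hH q) else 0) else 0) = 0 := by
      split_ifs with a b
      · exact absurd ⟨a, b⟩ h
      · simp
      · rfl
    rw [this]
    refine hasSum_zero.congr_fun fun r => ?_
    unfold G4; rw [if_neg]; rintro ⟨a, b, c⟩; exact h ⟨a, b⟩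

lemma g4_outer (p n : ℕ) : HasSum (g4 p n) (h4 p n) := by
  unfold g4 h4
  split_ifs with h
  · exact (hasSum_V4 n h).mul_left _
  · exact hasSum_zero

lemma frac_bound1 {q n : ℕ} (h0 : 0 < q) (h : q < n) :
    2 * (q:ℝ) / ((n:ℝ)^2 - (q:ℝ)^2) ≤ 1 / ((n:ℝ) - q) + 1 / q := by
  have h1 : (0:ℝ) < q := by exact_mod_cast h0
  have h2 : (0:ℝ) < (n:ℝ) - q := by rw [sub_pos]; exact_mod_cast h
  have : 2 * (q:ℝ) / ((n:ℝ)^2 - (q:ℝ)^2) ≤ 1 / ((n:ℝ) - q) := by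
    rw [div_le_div_iff₀ (sq_sub_pos h) h2]; nlinarith
  have : 0 < 1 / (q:ℝ) := by positivity
  linarith

lemma frac_bound2 {q n : ℕ} (h0 : 0 < q) (h : q < n) :
    2 * (n:ℝ) / ((n:ℝ)^2 - (q:ℝ)^2) ≤ 2 * (1 / ((n:ℝ) - q) + 1 / q) := by
  have h1 : (0:ℝ) < q := by exact_mod_cast h0
  have h2 : (0:ℝ) < (n:ℝ) - q := by rw [sub_pos]; exact_mod_cast h
  have : 2 * (n:ℝ) / ((n:ℝ)^2 - (q:ℝ)^2) ≤ 2 / ((n:ℝ) - q) := by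
    rw [div_le_div_iff₀ (sq_sub_pos h) h2]; nlinarith
  have : 0 < 1 / (q:ℝ) := by positivity
  have : 2 / ((n:ℝ) - q) = 2 * (1 / ((n:ℝ) - q)) := by ring
  linarith

lemma prod_bound {A B x y : ℝ} {n p : ℕ} (hp : 2 ≤ p) (hn : 0 < n) (hA : 0 ≤ A)
    (hAB : A ≤ B) (hx : |x| ≤ y) :
    |A / (n:ℝ)^p * x| ≤ B * y / (n:ℝ)^2 := by
  have hy : 0 ≤ y := (abs_nonneg x).trans hx
  have := pow_bound n p hp hn
  rw [abs_mul, abs_of_nonneg (by positivity), div_eq_mul_one_div]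
  calc A * (1 / (n:ℝ)^p) * |x| ≤ B * (1 / (n:ℝ)^2) * y := by
        have hB := hA.trans hAB
        gcongr
    _ = _ := by ring

lemma sum_h0 : Summable (hs fun n q => 1 / (n:ℝ)^2 * (1 / q) * hH (q - 1)) := by
  apply summable_cond _ 1
  intro n q h0 h
  have h2 : (0:ℝ) < (n:ℝ) - q := by rw [sub_pos]; exact_mod_cast h
  have := prod_bound (A := 1 / (q:ℝ)) (B := 1 / ((n:ℝ) - q) + 1 / q) (x := hH (q-1)) (y := hH (2 * n))
    (le_refl 2) (by omega : 0 < n) (by positivity) (by have : 0 < 1 / ((n:ℝ) - q) := by positivity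
                                                       linarith)
    (by rw [abs_of_nonneg (hH_nonneg _)]; exact hH_mono (by omega))
  rw [one_mul]
  convert this using 2
  ring

lemma sum_h1 (p : ℕ) (hp : 2 ≤ p) : Summable (hs (g1 p)) := by
  apply summable_cond _ 1
  intro n q h0 h
  rw [one_mul]
  have := sq_sub_pos h
  refine prod_bound hp (by omega) (by positivity) (frac_bound1 h0 h) ?_
  have a1 : hH n ≤ hH (q - 1 + n) := hH_mono (by omega)
  have a2 : hH (q - 1 + n) ≤ hH (2 * n) := hH_mono (by omega)
  have := hH_nonneg n
  rw [abs_le]; constructor <;> linarith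

lemma sum_h2 (p : ℕ) (hp : 2 ≤ p) : Summable (hs (g2 p)) := by
  apply summable_cond _ 1
  intro n q h0 h
  rw [one_mul]
  have := sq_sub_pos h
  refine prod_bound hp (by omega) (by positivity) (frac_bound1 h0 h) ?_
  have := hH_nonneg (2 * n)
  rw [abs_le]; constructor <;> linarith

lemma sum_h3 (p : ℕ) (hp : 2 ≤ p) : Summable (hs (g3 p)) := by
  apply summable_cond _ 2
  intro n q h0 h
  have := sq_sub_pos h
  refine prod_bound hp (by omega) (by positivity) (frac_bound2 h0 h) ?_
  have := hH_nonneg (2 * n)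
  have := hH_nonneg n
  have a1 : hH n ≤ hH (2 * n) := hH_mono (by omega)
  rw [abs_le]; constructor <;> linarith

lemma h_identity (p n : ℕ) (hp : 0 < p) :
    hs (g1 p) n + hs (g2 p) n - hs (g3 p) n - h4 p n
      = 1 / 2 * (1 / (n:ℝ)^(p+2)) - Z2 * (1 / (n:ℝ)^p) := by
  rcases Nat.eq_zero_or_pos n with rfl | hn
  · simp [hs, h4, hp.ne']
  obtain ⟨N, rfl⟩ : ∃ N, n = N + 1 := ⟨n - 1, by omega⟩
  unfold hs h4
  rw [sum_cond, sum_cond, sum_cond, if_pos hn, R3]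
  have key := finite_identity N ((N+1 : ℕ):ℝ) (by push_cast; ring)
  simp only [g1, g2, g3, add_tsub_cancel_right, Nat.cast_add_one (R := ℝ), ← sum_mul] at *
  have e1 : ∑ i ∈ range N, 2 * ((i:ℝ) + 1) / (((N:ℝ) + 1) ^ 2 - ((i:ℝ) + 1) ^ 2) / ((N:ℝ) + 1) ^ p
      * (hH (i + (N + 1)) - hH (N + 1)) = 1 / ((N:ℝ) + 1) ^ p * ∑ i ∈ range N, 2 * ((i:ℝ) + 1) / (((N:ℝ) + 1) ^ 2 - ((i:ℝ) + 1) ^ 2) 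
      * (hH (i + (N + 1)) - hH (N + 1)) := by
    rw [mul_sum]; refine sum_congr rfl fun i _ => by ring
  rw [e1, ← sum_div, ← sum_div]
  have e2 : 1 / 2 * (1 / ((N:ℝ)+1)^(p+2)) = 1 / ((N:ℝ)+1)^p * (1 / (2 * ((N:ℝ)+1)^2)) := by
    rw [pow_add]; field_simp
  rw [e2, ← neg_neg (1 / (2 * ((N:ℝ)+1)^2)), ← key]
  ring

lemma sum_h4 (p : ℕ) (hp : 2 ≤ p) : Summable (h4 p) := by
  have a : Summable (fun n : ℕ => 1 / 2 * (1 / (n:ℝ)^(p+2)) - Z2 * (1 / (n:ℝ)^p)) :=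
    ((Real.summable_one_div_nat_pow.2 (by omega)).mul_left _).sub
      ((Real.summable_one_div_nat_pow.2 (by omega)).mul_left _)
  refine ((((sum_h1 p hp).add (sum_h2 p hp)).sub (sum_h3 p hp)).sub a).congr fun n => ?_
  rw [← h_identity p n (by omega)]; ring

lemma tsum_total (p : ℕ) (hp : 2 ≤ p) :
    ∑' n, hs (g1 p) n + ∑' n, hs (g2 p) n - ∑' n, hs (g3 p) n - ∑' n, h4 p n
      = 1 / 2 * (∑' n : ℕ, 1 / (n:ℝ)^(p+2)) - Z2 * (∑' n : ℕ, 1 / (n:ℝ)^p) := by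
  have s1 := sum_h1 p hp
  have s2 := sum_h2 p hp
  have s3 := sum_h3 p hp
  have s4 := sum_h4 p hp
  rw [← s1.tsum_add s2, ← (s1.add s2).tsum_sub s3, ← ((s1.add s2).sub s3).tsum_sub s4,
    tsum_congr (fun n => h_identity p n (by omega)), Summable.tsum_sub, tsum_mul_left, tsum_mul_left]
  · exact (Real.summable_one_div_nat_pow.2 (by omega)).mul_left _
  · exact (Real.summable_one_div_nat_pow.2 (by omega)).mul_left _

def rotE : ℕ × ℕ × ℕ ≃ ℕ × ℕ × ℕ where
  toFun x := (x.2.1, x.2.2, x.1)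
  invFun x := (x.2.2, x.1, x.2.1)
  left_inv _ := rfl
  right_inv _ := rfl

def revE : ℕ × ℕ × ℕ ≃ ℕ × ℕ × ℕ where
  toFun x := (x.2.2, x.2.1, x.1)
  invFun x := (x.2.2, x.2.1, x.1)
  left_inv _ := rfl
  right_inv _ := rfl

lemma hasSum_total (p : ℕ) (hp : 2 ≤ p) :
    HasSum (fun x : ℕ × ℕ × ℕ => G1 p x.1 x.2.1 x.2.2 + G2 p x.2.1 x.2.2 x.1
      - G3 p x.2.1 x.2.2 x.1 - G4 p x.2.2 x.2.1 x.1)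
      (1 / 2 * (∑' n : ℕ, 1 / (n:ℝ)^(p+2)) - Z2 * (∑' n : ℕ, 1 / (n:ℝ)^p)) := by
  rw [← tsum_total p hp]
  have b1 := triple (G1 p) (G1_nonneg p) _ (hs (g1 p)) (G1_inner p) (fun n => hasSum_cond n _) (sum_h1 p hp)
  have b2 := rotE.hasSum_iff.2 
    (triple (G2 p) (G2_nonneg p) _ (hs (g2 p)) (G2_inner p) (fun n => hasSum_cond n _) (sum_h2 p hp))
  have b3 := rotE.hasSum_iff.2 
    (triple (G3 p) (G3_nonneg p) _ (hs (g3 p)) (G3_inner p) (fun n => hasSum_cond n _) (sum_h3 p hp))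
  have b4 := revE.hasSum_iff.2 
    (triple (G4 p) (G4_nonneg p) _ (h4 p) (G4_inner p) (g4_outer p) (sum_h4 p hp))
  exact ((b1.add b2).sub b3).sub b4

lemma mzv1_s11 (s : ℕ) (hs : 0 < s) : mzv ![s] = ∑' n : ℕ, 1 / (n:ℝ)^s := by
  unfold mzv
  have inj : Function.Injective
      (fun k : {k : Fin 1 → ℕ // StrictAnti k ∧ ∀ i, 0 < k i} => k.1 0) := by
    intro a b h
    apply Subtype.ext; funext i; fin_cases i; exact h
  rw [← inj.tsum_eq (f := fun n : ℕ => 1 / (n:ℝ)^s)]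
  · refine tsum_congr fun k => ?_
    simp
  · intro n hn
    have hn0 : 0 < n := by
      rcases Nat.eq_zero_or_pos n with rfl | h
      · simp [hs.ne'] at hn
      · exact h
    refine ⟨⟨fun _ => n, ⟨fun i j h => ?_, fun _ => hn0⟩⟩, rfl⟩
    have := Subsingleton.elim i j
    exact absurd h (by simp [this])

lemma mzv3_s11 (a b c : ℕ) (ha : 2 ≤ a) (hb : 1 ≤ b) (hc : 1 ≤ c) :
    HasSum (fun x : ℕ × ℕ × ℕ => if 0 < x.2.2 ∧ x.2.2 < x.2.1 ∧ x.2.1 < x.1 then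
      1 / (x.1:ℝ)^a * (1 / (x.2.1:ℝ)^b) * (1 / (x.2.2:ℝ)^c) else 0) (mzv ![a, b, c]) := by
  have s0 := triple G0 G0_nonneg _ _ G0_inner (fun n => hasSum_cond n _) sum_h0
  have hS : Summable (fun x : ℕ × ℕ × ℕ => if 0 < x.2.2 ∧ x.2.2 < x.2.1 ∧ x.2.1 < x.1 then
      1 / (x.1:ℝ)^a * (1 / (x.2.1:ℝ)^b) * (1 / (x.2.2:ℝ)^c) else 0) := by
    refine s0.summable.of_nonneg_of_le (fun x => by split_ifs <;> positivity) ?_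
    rintro ⟨k, l, m⟩
    unfold G0
    dsimp only
    split_ifs with h
    · have pb : ∀ n i j : ℕ, 0 < n → i ≤ j → 1 / (n:ℝ)^j ≤ 1 / (n:ℝ)^i := by
        intro n i j hn hij
        have : (1:ℝ) ≤ n := by exact_mod_cast hn
        exact one_div_le_one_div_of_le (by positivity) (pow_le_pow_right₀ this hij)
      have p1 := pb k 2 a (by omega) ha
      have p2 := pb l 1 b (by omega) hb
      have p3 := pb m 1 c (by omega) hc
      rw [pow_one] at p2 p3
      gcongr ?_ * ?_ * ?_
    · rfl
  have inj : Function.Injective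
      (fun k : {k : Fin 3 → ℕ // StrictAnti k ∧ ∀ i, 0 < k i} => (k.1 0, k.1 1, k.1 2)) := by
    intro a b h
    simp only [Prod.mk.injEq] at h
    apply Subtype.ext; funext i; fin_cases i
    · exact h.1
    · exact h.2.1
    · exact h.2.2
  have hz : ∀ x ∉ Set.range
      (fun k : {k : Fin 3 → ℕ // StrictAnti k ∧ ∀ i, 0 < k i} => (k.1 0, k.1 1, k.1 2)),
      (if 0 < x.2.2 ∧ x.2.2 < x.2.1 ∧ x.2.1 < x.1 then
      1 / (x.1:ℝ)^a * (1 / (x.2.1:ℝ)^b) * (1 / (x.2.2:ℝ)^c) else 0) = 0 := by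
    rintro ⟨k, l, m⟩ hx
    rw [if_neg]
    rintro ⟨h1, h2, h3⟩
    dsimp only at h1 h2 h3
    apply hx
    refine ⟨⟨![k, l, m], ?_, ?_⟩, rfl⟩
    · rw [Fin.strictAnti_iff_succ_lt]
      intro i; fin_cases i
      · exact h3
      · exact h2
    · intro i; fin_cases i
      · show 0 < k; omega
      · show 0 < l; omega
      · exact h1
  obtain ⟨V, hV⟩ := hS
  have e := (inj.hasSum_iff hz).2 hV
  have e2 : HasSum (fun k : {k : Fin 3 → ℕ // StrictAnti k ∧ ∀ i, 0 < k i} =>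
      ∏ i, (1 : ℝ) / (k.1 i : ℝ) ^ (![a, b, c] i)) V := by
    refine e.congr_fun fun k => ?_
    have c1 : k.1 1 < k.1 0 := k.2.1 (by decide)
    have c2 : k.1 2 < k.1 1 := k.2.1 (by decide)
    have c3 := k.2.2 2
    simp [Fin.prod_univ_three, c1, c2, c3]
    ring
  have e3 := e2.tsum_eq
  unfold mzv
  rw [e3]; exact hV

theorem weighted_sum_depth3_c_minus_a (w : ℕ) (hw : 4 ≤ w) (hew : Even w) :
    (∑ a ∈ Finset.Icc 2 (w - 2), ∑ b ∈ Finset.Icc 1 (w - a - 1),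
        ((-1 : ℝ) ^ (w - a - b) - (-1 : ℝ) ^ a) * mzv ![a, b, w - a - b])
    = (1 / 2) * mzv ![w] - mzv ![2] * mzv ![w - 2] := by
  obtain ⟨n, rfl⟩ : ∃ n, w = n + 4 := ⟨w - 4, by omega⟩
  have hn : Even n := by simpa [Nat.even_add, show Even 4 by decide] using hew
  have z2 : mzv ![2] = Z2 := by
    rw [mzv1_s11 2 (by norm_num), (Real.summable_one_div_nat_pow.2 one_lt_two).tsum_eq_zero_add]
    simp [Z2]
  rw [z2, mzv1_s11 _ (by omega), mzv1_s11 _ (by omega), show n + 4 - 2 = n + 2 by omega]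
  refine HasSum.unique ?_ (hasSum_total (n+2) (by omega))
  have hL : HasSum (fun x : ℕ × ℕ × ℕ => ∑ a ∈ Finset.Icc 2 (n + 2), ∑ b ∈ Finset.Icc 1 (n + 4 - a - 1),
        ((-1 : ℝ) ^ (n + 4 - a - b) - (-1 : ℝ) ^ a) *
         (if 0 < x.2.2 ∧ x.2.2 < x.2.1 ∧ x.2.1 < x.1 then
      1 / (x.1:ℝ)^a * (1 / (x.2.1:ℝ)^b) * (1 / (x.2.2:ℝ)^(n + 4 - a - b)) else 0))
      (∑ a ∈ Finset.Icc 2 (n + 2), ∑ b ∈ Finset.Icc 1 (n + 4 - a - 1),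
        ((-1 : ℝ) ^ (n + 4 - a - b) - (-1 : ℝ) ^ a) * mzv ![a, b, n + 4 - a - b]) := by
    refine hasSum_sum fun a ha => hasSum_sum fun b hb => ?_
    rw [mem_Icc] at ha hb
    exact (mzv3_s11 a b _ ha.1 hb.1 (by omega)).mul_left _
  refine hL.congr_fun ?_
  rintro ⟨k, l, m⟩
  dsimp only
  unfold G1 G2 G3 G4
  by_cases h : 0 < m ∧ m < l ∧ l < k
  · rw [if_pos h, if_pos h, if_pos h, if_pos h]
    simp only [if_pos h]
    rw [pointwise k l m (by exact_mod_cast h.1) (by exact_mod_cast h.2.1) (by exact_mod_cast h.2.2) n hn]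
  · rw [if_neg h, if_neg h, if_neg h, if_neg h]
    simp only [if_neg h]
    simp
end
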